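/- There exist real numbers r, s with 0 < s < r < 1 and a compact packing P of the Euclidean plane by disks of radii 1, r, s using all three radii, such that P is saturated, yet there exists a (non-compact) packing by disks with radii in {1, r, s} whose density is strictly greater than the density of every compact packing by disks with radii in {1, r, s}; hence the maximum density is not always reached by a triangulated packing even when a saturated triangulated packing exists. -/

import Mathlib

open Metric Set

noncomputable section

/-- The Euclidean plane. -/
abbrev Plane : Type := EuclideanSpace ℝ (Fin 2)

/-- A closed disk in the plane, given by its center and (positive) radius. -/
structure Disk where
  center : Plane
  radius : ℝ
  radius_pos : 0 < radius

/-- The set of points of a disk (a closed ball). -/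
def Disk.set (d : Disk) : Set Plane := closedBall d.center d.radius

/-- A packing: a family of closed disks with pairwise disjoint interiors. -/
def IsPacking (P : Set Disk) : Prop :=
  ∀ d ∈ P, ∀ d' ∈ P, d ≠ d' → Disjoint (interior d.set) (interior d'.set)

/-- Two disks are (externally) tangent: they intersect in exactly one point. -/
def Disk.Tangent (d d' : Disk) : Prop :=
  dist d.center d'.center = d.radius + d'.radius

/-- The union of the disks of a packing. -/
def packingUnion (P : Set Disk) : Set Plane := ⋃ d ∈ P, d.set

/-- A packing is compact (triangulated) if every connected component of the
complement of the union of the disks is bounded and its closure meets exactly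
three of the disks, these three disks being pairwise tangent. -/
def IsCompactPacking (P : Set Disk) : Prop :=
  IsPacking P ∧
  ∀ x ∈ (packingUnion P)ᶜ,
    Bornology.IsBounded (connectedComponentIn (packingUnion P)ᶜ x) ∧
    ∃ d₁ d₂ d₃ : Disk, d₁ ∈ P ∧ d₂ ∈ P ∧ d₃ ∈ P ∧
      d₁ ≠ d₂ ∧ d₁ ≠ d₃ ∧ d₂ ≠ d₃ ∧
      d₁.Tangent d₂ ∧ d₁.Tangent d₃ ∧ d₂.Tangent d₃ ∧
      {d ∈ P | (closure (connectedComponentIn (packingUnion P)ᶜ x) ∩ d.set).Nonempty}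
        = {d₁, d₂, d₃}

/-- A packing uses the radius `r` if one of its disks has radius `r`. -/
def UsesRadius (P : Set Disk) (r : ℝ) : Prop := ∃ d ∈ P, d.radius = r

/-- All radii of the disks of `P` belong to `S`. -/
def RadiiIn (P : Set Disk) (S : Set ℝ) : Prop := ∀ d ∈ P, d.radius ∈ S

/-- The square `[-r, r]²`. -/
def square (r : ℝ) : Set Plane := {x | |x 0| ≤ r ∧ |x 1| ≤ r}

/-- The density of a packing: the limsup, as `r → ∞`, of the proportion of the
square `[-r, r]²` covered by the disks. -/
def density (P : Set Disk) : ℝ :=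
  Filter.limsup
    (fun r : ℝ => (MeasureTheory.volume (packingUnion P ∩ square r)).toReal / (4 * r ^ 2))
    Filter.atTop

end

/-- A packing with radii in `S` is saturated if no closed disk of radius in `S` can be
added with interior disjoint from all disks of the packing. -/
def Saturated (P : Set Disk) (S : Set ℝ) : Prop :=
  ¬ ∃ d : Disk, d.radius ∈ S ∧ ∀ d' ∈ P, Disjoint (interior d.set) (Disk.set d')

/-!
The radii `r ≈ 0.411` and `s ≈ 0.151` are those of a periodic triangulated packing: a rhombic
lattice of unit disks, with two disks of radius `s` inserted between the unit disks on each long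
edge and a disk of radius `r` in each of the two remaining gaps.

The triangles of centers of the triads of tangent disks around the holes of a compact packing tile
the plane, so the density of the packing is at most the largest density of the disks in such a
triangle. The half-angles of these triangles at a given disk add up to `π`. With the radii `1`, `r`,
`s`, a count of the half-angles at a disk of radius `s` excludes the two densest kinds of triangles,
with radii `1, 1, s` and `1, s, s`, and in all the others the density is at most `0.947`. On the
other hand `s < 2 / √3 - 1`, so disks of radius `s` fit into the holes of the hexagonal packing of
unit disks; the resulting packing has density at least `0.948`, but it is not compact.

Saturation and compactness of the periodic packing come from an inequality between the radii of a
triad, here called tightness, under which a disk of radius at least `s` that overlaps none of the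
three disks does not even meet the triangle of their centers.
-/

open MeasureTheory Module Topology
open scoped RealInnerProductSpace

section InnerProductGeometry

variable {E : Type*} [NormedAddCommGroup E] [InnerProductSpace ℝ E] {u v w y : E} {a ρ p q : ℝ}

theorem norm_smul_add_smul_sq (p q : ℝ) (u v : E) :
    ‖p • u + q • v‖ ^ 2 = p ^ 2 * ‖u‖ ^ 2 + 2 * (p * q) * ⟪u, v⟫ + q ^ 2 * ‖v‖ ^ 2 := by
  rw [norm_add_sq_real, norm_smul, norm_smul, mul_pow, mul_pow, Real.norm_eq_abs, Real.norm_eq_abs,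
    sq_abs, sq_abs, real_inner_smul_left, real_inner_smul_right]
  ring

theorem nonneg_of_norm_smul_add_smul_le (huv : ⟪u, v⟫ < ‖u‖ * ‖v‖)
    (h : ‖p • u + q • v‖ ≤ p * ‖u‖ + q * ‖v‖) : 0 ≤ p ∧ 0 ≤ q := by
  have hu : 0 < ‖u‖ := norm_pos_iff.2 (by rintro rfl; simp at huv)
  have hv : 0 < ‖v‖ := norm_pos_iff.2 (by rintro rfl; simp at huv)
  have hsum : 0 ≤ p * ‖u‖ + q * ‖v‖ := (norm_nonneg _).trans h
  have hsq := pow_le_pow_left₀ (norm_nonneg _) h 2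
  rw [norm_smul_add_smul_sq] at hsq
  have hpq : 0 ≤ p * q := by
    by_contra! hneg
    nlinarith [mul_pos_of_neg_of_neg hneg (sub_neg.2 huv)]
  constructor
  · by_contra! hp
    nlinarith [nonpos_of_mul_nonneg_right hpq hp]
  · by_contra! hq
    nlinarith [nonpos_of_mul_nonneg_left hpq hq]

theorem inner_sub_nonneg_of_mem_cones (ha : 0 < a) (hρ : 0 ≤ ρ) (hw : ‖w‖ ^ 2 = a ^ 2 + ρ ^ 2)
    (hu : a * ‖u‖ ≤ ⟪u, w⟫) (hu' : ρ * ‖w - u‖ ≤ ⟪w - u, w⟫) : 0 ≤ ⟪u, w - u⟫ := by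
  have hsq := pow_le_pow_left₀ (by positivity) hu 2
  have hsq' := pow_le_pow_left₀ (by positivity) hu' 2
  have hX : 0 ≤ ⟪u, w⟫ := (by positivity : 0 ≤ a * ‖u‖).trans hu
  have hY : 0 ≤ ⟪w - u, w⟫ := (by positivity : 0 ≤ ρ * ‖w - u‖).trans hu'
  rw [inner_sub_left, real_inner_self_eq_norm_sq, hw] at hsq' hY
  rw [mul_pow, norm_sub_sq_real, real_inner_comm, hw] at hsq'
  rw [mul_pow] at hsq
  rw [inner_sub_right, real_inner_self_eq_norm_sq]
  by_contra! hneg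
  have hXpos : 0 < ⟪u, w⟫ := by
    refine hX.lt_of_ne fun h0 => ?_
    rw [← h0] at hsq hneg
    nlinarith [pow_pos ha 2]
  have haX : a ^ 2 < ⟪u, w⟫ := by nlinarith [pow_pos ha 2]
  nlinarith

/-- Seen from `w`, either the ray to `u` misses the ball of radius `a` about `0`, or `u` lies on the
near side of that ball. -/
theorem lt_norm_of_mem_segment (ha : 0 < a) (hρ : 0 < ρ) (hw : ‖w‖ ^ 2 = a ^ 2 + ρ ^ 2)
    (hu : a * ‖u‖ ≤ ⟪u, w⟫) (hau : a < ‖u‖) (hy : y ∈ segment ℝ w u) : a < ‖y‖ := by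
  rw [segment_eq_image'] at hy
  obtain ⟨l, ⟨hl0, hl1⟩, rfl⟩ := hy
  by_cases hcone : ρ * ‖w - u‖ ≤ ⟪w - u, w⟫
  · have hinner := inner_sub_nonneg_of_mem_cones ha hρ.le hw hu hcone
    have : ‖u‖ * ‖u‖ ≤ ‖u‖ * ‖w + l • (u - w)‖ := calc
      ‖u‖ * ‖u‖ ≤ ‖u‖ * ‖u‖ + (1 - l) * ⟪u, w - u⟫ := by nlinarith
      _ = ⟪u, w + l • (u - w)⟫ := by
        simp only [inner_add_right, inner_smul_right, inner_sub_right,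
          real_inner_self_eq_norm_mul_norm]
        ring
      _ ≤ _ := real_inner_le_norm _ _
    exact hau.trans_le (le_of_mul_le_mul_left this (ha.trans hau))
  · push Not at hcone
    have hsq : ‖w + l • (u - w)‖ ^ 2
        = a ^ 2 + (ρ - l * ‖w - u‖) ^ 2 + 2 * l * (ρ * ‖w - u‖ - ⟪w - u, w⟫) := by
      rw [← neg_sub w u, smul_neg, ← sub_eq_add_neg, norm_sub_sq_real, real_inner_smul_right,
        norm_smul, mul_pow, Real.norm_eq_abs, sq_abs, hw, real_inner_comm]
      ring
    have : a ^ 2 < ‖w + l • (u - w)‖ ^ 2 := by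
      rw [hsq]
      rcases hl0.eq_or_lt with rfl | hl
      · nlinarith
      · nlinarith [mul_pos hl (sub_pos.2 hcone), sq_nonneg (ρ - l * ‖w - u‖)]
    exact lt_of_pow_lt_pow_left₀ 2 (norm_nonneg _) this

end InnerProductGeometry

section Disks

variable {P Q : Set Disk} {d e : Disk} {x : Plane}

theorem Disk.isClosed (d : Disk) : IsClosed d.set := isClosed_closedBall

theorem Disk.mem_set : x ∈ d.set ↔ dist x d.center ≤ d.radius := mem_closedBall

theorem Disk.center_mem (d : Disk) : d.center ∈ d.set := mem_closedBall_self d.radius_pos.le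

theorem Disk.interior_eq (d : Disk) : interior d.set = ball d.center d.radius :=
  interior_closedBall _ d.radius_pos.ne'

theorem Disk.disjoint_interior_iff :
    Disjoint (interior d.set) (interior e.set) ↔ d.radius + e.radius ≤ dist d.center e.center := by
  rw [d.interior_eq, e.interior_eq, disjoint_ball_ball_iff d.radius_pos e.radius_pos]

theorem Disk.Tangent.symm (h : d.Tangent e) : e.Tangent d := by
  rw [Disk.Tangent, dist_comm, add_comm]
  exact h

theorem Disk.Tangent.ne (h : d.Tangent e) : d ≠ e := by
  rintro rfl
  rw [Disk.Tangent, dist_self] at h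
  linarith [d.radius_pos]

theorem Disk.Tangent.segment_subset (h : d.Tangent e) :
    segment ℝ d.center e.center ⊆ d.set ∪ e.set := by
  intro x hx
  have hsum := dist_add_dist_of_mem_segment hx
  rw [h] at hsum
  rw [mem_union, Disk.mem_set, Disk.mem_set, dist_comm x d.center]
  by_contra! hcon
  linarith

theorem mem_packingUnion : x ∈ packingUnion P ↔ ∃ d ∈ P, x ∈ d.set := by
  simp [packingUnion]

theorem packingUnion_mono (h : Q ⊆ P) : packingUnion Q ⊆ packingUnion P :=
  biUnion_subset_biUnion_left h

theorem isPacking_iff : IsPacking P ↔ P.Pairwise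
    fun d e => d.radius + e.radius ≤ dist d.center e.center := by
  simp only [IsPacking, Disk.disjoint_interior_iff, Set.Pairwise]

end Disks

/-! ### Triads of tangent disks -/

/-- Three pairwise tangent disks. -/
structure IsTriad (T : Set Disk) : Prop where
  encard_eq : T.encard = 3
  tangent : T.Pairwise Disk.Tangent

/-- The triangle spanned by the centers of the disks of a triad. -/
def hull (T : Set Disk) : Set Plane := convexHull ℝ (Disk.center '' T)

/-- The part of the triangle `hull T` left uncovered by the three disks of the triad `T`. -/
def hole (T : Set Disk) : Set Plane := hull T \ packingUnion T

/-- The inradius of the triangle of centers, which is `√(abc / (a + b + c))` for a triad with radii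
`a`, `b`, `c`. -/
noncomputable def inradius (T : Set Disk) : ℝ :=
  √((∏ᶠ d ∈ T, d.radius) / ∑ᶠ d ∈ T, d.radius)

/-- The incenter of the triangle of centers, characterized as the point with the same power
`inradius T ^ 2` with respect to the three circles. -/
structure IsIncenter (T : Set Disk) (o : Plane) : Prop where
  mem_hull : o ∈ hull T
  dist_sq : ∀ d ∈ T, dist o d.center ^ 2 = d.radius ^ 2 + inradius T ^ 2

section Triads

variable {T : Set Disk} {d e f : Disk} {o x y : Plane}

theorem isTriad_of_tangent (hde : d.Tangent e) (hdf : d.Tangent f) (hef : e.Tangent f) :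
    IsTriad {d, e, f} where
  encard_eq := encard_eq_three.2 ⟨d, e, f, hde.ne, hdf.ne, hef.ne, rfl⟩
  tangent := by
    have : Std.Symm Disk.Tangent := ⟨fun _ _ => Disk.Tangent.symm⟩
    simp [pairwise_insert_of_symm, hde, hdf, hef]

theorem IsTriad.exists_eq (h : IsTriad T) (hd : d ∈ T) :
    ∃ e f, d.Tangent e ∧ d.Tangent f ∧ e.Tangent f ∧ T = {d, e, f} := by
  obtain ⟨a, b, c, hab, hac, hbc, rfl⟩ := encard_eq_three.1 h.encard_eq
  have tangent : ∀ {u v : Disk}, u ∈ ({a, b, c} : Set Disk) → v ∈ ({a, b, c} : Set Disk) →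
      u ≠ v → u.Tangent v := fun hu hv => h.tangent hu hv
  rcases hd with rfl | rfl | rfl
  · exact ⟨b, c, tangent (by simp) (by simp) hab, tangent (by simp) (by simp) hac,
      tangent (by simp) (by simp) hbc, rfl⟩
  · exact ⟨a, c, tangent (by simp) (by simp) hab.symm, tangent (by simp) (by simp) hbc,
      tangent (by simp) (by simp) hac, insert_comm _ _ _⟩
  · exact ⟨a, b, tangent (by simp) (by simp) hac.symm, tangent (by simp) (by simp) hbc.symm,
      tangent (by simp) (by simp) hab, by rw [pair_comm b, insert_comm]⟩

theorem IsTriad.finite (h : IsTriad T) : T.Finite :=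
  finite_of_encard_eq_coe (k := 3) h.encard_eq

theorem IsTriad.nonempty (h : IsTriad T) : T.Nonempty :=
  nonempty_of_encard_ne_zero (by simp [h.encard_eq])

theorem inradius_triple (hde : d ≠ e) (hdf : d ≠ f) (hef : e ≠ f) : inradius {d, e, f} =
    √(d.radius * e.radius * f.radius / (d.radius + e.radius + f.radius)) := by
  rw [inradius, finprod_mem_insert _ (by simp [hde, hdf]) (toFinite _), finprod_mem_pair hef,
    finsum_mem_insert _ (by simp [hde, hdf]) (toFinite _), finsum_mem_pair hef, mul_assoc,
    add_assoc]

theorem inradius_triple_sq (hde : d ≠ e) (hdf : d ≠ f) (hef : e ≠ f) : inradius {d, e, f} ^ 2 =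
    d.radius * e.radius * f.radius / (d.radius + e.radius + f.radius) := by
  have := d.radius_pos
  have := e.radius_pos
  have := f.radius_pos
  rw [inradius_triple hde hdf hef, Real.sq_sqrt (by positivity)]

theorem IsTriad.inradius_pos (h : IsTriad T) : 0 < inradius T := by
  obtain ⟨d, hd⟩ := h.nonempty
  obtain ⟨e, f, hde, hdf, hef, rfl⟩ := h.exists_eq hd
  have := d.radius_pos
  have := e.radius_pos
  have := f.radius_pos
  rw [inradius_triple hde.ne hdf.ne hef.ne]
  positivity

theorem hull_convex (T : Set Disk) : Convex ℝ (hull T) := convex_convexHull ℝ _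

theorem center_mem_hull (hd : d ∈ T) : d.center ∈ hull T :=
  subset_convexHull ℝ _ (mem_image_of_mem _ hd)

theorem IsTriad.isCompact_hull (h : IsTriad T) : IsCompact (hull T) :=
  (h.finite.image _).isCompact_convexHull ℝ

theorem IsTriad.isClosed_hull (h : IsTriad T) : IsClosed (hull T) := h.isCompact_hull.isClosed

theorem mem_convexHull_triple {V : Type*} [AddCommGroup V] [Module ℝ V] {a b c x : V} :
    x ∈ convexHull ℝ {a, b, c} ↔ ∃ α β γ : ℝ, 0 ≤ α ∧ 0 ≤ β ∧ 0 ≤ γ ∧ α + β + γ = 1 ∧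
      α • a + β • b + γ • c = x := by
  constructor
  · rw [convexHull_insert (insert_nonempty _ _), convexHull_pair, convexJoin_singleton_left,
      mem_iUnion₂]
    rintro ⟨y, ⟨β, γ, hβ, hγ, hβγ, rfl⟩, α, δ, hα, hδ, hαδ, rfl⟩
    refine ⟨α, δ * β, δ * γ, hα, mul_nonneg hδ hβ, mul_nonneg hδ hγ, ?_, by module⟩
    rw [add_assoc, ← mul_add, hβγ, mul_one, hαδ]
  · rintro ⟨α, β, γ, hα, hβ, hγ, hsum, rfl⟩
    have := (convex_convexHull ℝ {a, b, c}).sum_mem (t := Finset.univ) (w := ![α, β, γ])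
      (z := ![a, b, c])
    simp only [Fin.sum_univ_three, Fin.forall_fin_succ, Finset.mem_univ, true_imp_iff] at this
    exact this ⟨hα, hβ, hγ, by simp⟩ hsum ⟨subset_convexHull ℝ _ (by simp),
      subset_convexHull ℝ _ (by simp), subset_convexHull ℝ _ (by simp), by simp⟩

theorem hull_triple : hull {d, e, f} = convexHull ℝ {d.center, e.center, f.center} := by
  rw [hull, image_insert_eq, image_pair]

theorem mem_hull_triple : x ∈ hull {d, e, f} ↔ ∃ α β γ : ℝ, 0 ≤ α ∧ 0 ≤ β ∧ 0 ≤ γ ∧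
    α + β + γ = 1 ∧ α • d.center + β • e.center + γ • f.center = x := by
  rw [hull_triple, mem_convexHull_triple]

theorem Disk.Tangent.norm_sub (h : d.Tangent e) :
    ‖e.center - d.center‖ = d.radius + e.radius := by
  rw [← h, dist_comm, dist_eq_norm]

theorem inner_sub_center (hde : d.Tangent e) (hdf : d.Tangent f) (hef : e.Tangent f) :
    ⟪e.center - d.center, f.center - d.center⟫ =
      (d.radius + e.radius) * (d.radius + f.radius) - 2 * (e.radius * f.radius) := by
  have h := norm_sub_sq_real (f.center - d.center) (e.center - d.center)
  rw [sub_sub_sub_cancel_right, hef.norm_sub, hde.norm_sub, hdf.norm_sub, real_inner_comm] at h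
  linarith

theorem inner_sub_center_lt (hde : d.Tangent e) (hdf : d.Tangent f) (hef : e.Tangent f) :
    ⟪e.center - d.center, f.center - d.center⟫
      < ‖e.center - d.center‖ * ‖f.center - d.center‖ := by
  rw [inner_sub_center hde hdf hef, hde.norm_sub, hdf.norm_sub]
  linarith [mul_pos e.radius_pos f.radius_pos]

theorem dist_incenter_sq (hde : d.Tangent e) (hdf : d.Tangent f) (hef : e.Tangent f) {S : ℝ}
    (hS : S = d.radius + e.radius + f.radius)
    (ho : o = (2 * S)⁻¹ • ((e.radius + f.radius) • d.center + (d.radius + f.radius) • e.center +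
      (d.radius + e.radius) • f.center)) :
    dist o d.center ^ 2 = d.radius ^ 2 + d.radius * e.radius * f.radius / S := by
  have := d.radius_pos
  have := e.radius_pos
  have := f.radius_pos
  have hS0 : 0 < S := by linarith
  have hod : o - d.center = ((2 * S)⁻¹ * (d.radius + f.radius)) • (e.center - d.center) +
      ((2 * S)⁻¹ * (d.radius + e.radius)) • (f.center - d.center) := by
    have h1 : (2 * S)⁻¹ * (e.radius + f.radius) = 1 - (2 * S)⁻¹ * (d.radius + f.radius)
        - (2 * S)⁻¹ * (d.radius + e.radius) := by field_simp; rw [hS]; ring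
    rw [ho, smul_add, smul_add, smul_smul, smul_smul, smul_smul, h1]
    module
  rw [dist_eq_norm, hod, norm_smul_add_smul_sq, inner_sub_center hde hdf hef, hde.norm_sub,
    hdf.norm_sub]
  field_simp
  rw [hS]
  ring

theorem IsTriad.exists_isIncenter (h : IsTriad T) : ∃ o, IsIncenter T o := by
  obtain ⟨d, hd⟩ := h.nonempty
  obtain ⟨e, f, hde, hdf, hef, rfl⟩ := h.exists_eq hd
  have := d.radius_pos
  have := e.radius_pos
  have := f.radius_pos
  refine ⟨(2 * (d.radius + e.radius + f.radius))⁻¹ • ((e.radius + f.radius) • d.center +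
    (d.radius + f.radius) • e.center + (d.radius + e.radius) • f.center), ?_, ?_⟩
  · rw [mem_hull_triple, smul_add, smul_add, smul_smul, smul_smul, smul_smul]
    refine ⟨_, _, _, by positivity, by positivity, by positivity, ?_, rfl⟩
    field_simp
    ring
  · rw [inradius_triple_sq hde.ne hdf.ne hef.ne]
    rintro c (rfl | rfl | rfl)
    · exact dist_incenter_sq hde hdf hef rfl rfl
    · rw [dist_incenter_sq hde.symm hef hdf (S := d.radius + c.radius + f.radius) (by ring)
        (by congr 1; module)]
      ring
    · rw [dist_incenter_sq hdf.symm hef.symm hde (S := d.radius + e.radius + c.radius) (by ring)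
        (by congr 1; module)]
      ring

theorem IsIncenter.inner_sub_center (h : IsIncenter T o) (hd : d ∈ T) (he : e ∈ T)
    (hde : d.Tangent e) :
    ⟪e.center - d.center, o - d.center⟫ = d.radius * (d.radius + e.radius) := by
  have hsq := norm_sub_sq_real (o - d.center) (e.center - d.center)
  rw [sub_sub_sub_cancel_right, ← dist_eq_norm, ← dist_eq_norm, h.dist_sq d hd, h.dist_sq e he,
    hde.norm_sub, real_inner_comm] at hsq
  linarith

theorem IsIncenter.radius_mul_norm_le (h : IsIncenter T o) (hT : IsTriad T) (hd : d ∈ T)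
    (hx : x ∈ hull T) : d.radius * ‖x - d.center‖ ≤ ⟪x - d.center, o - d.center⟫ := by
  have hconv : Convex ℝ {x | d.radius * ‖x - d.center‖ ≤ ⟪x - d.center, o - d.center⟫} := by
    intro x hx y hy α β hα hβ hαβ
    have hsub : α • x + β • y - d.center = α • (x - d.center) + β • (y - d.center) := by
      rw [eq_sub_of_add_eq hαβ]
      module
    have htri := norm_add_le (α • (x - d.center)) (β • (y - d.center))
    rw [norm_smul, norm_smul, Real.norm_of_nonneg hα, Real.norm_of_nonneg hβ] at htri
    simp only [mem_ofPred_eq] at hx hy ⊢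
    rw [hsub, inner_add_left, real_inner_smul_left, real_inner_smul_left]
    calc _ ≤ d.radius * (α * ‖x - d.center‖ + β * ‖y - d.center‖) := by
          gcongr
          exact d.radius_pos.le
      _ = α * (d.radius * ‖x - d.center‖) + β * (d.radius * ‖y - d.center‖) := by ring
      _ ≤ _ := by gcongr
  refine convexHull_min ?_ hconv hx
  rintro _ ⟨e, he, rfl⟩
  rcases eq_or_ne d e with rfl | hde
  · simp
  · have hde := hT.tangent hd he hde
    simp [h.inner_sub_center hd he hde, hde.norm_sub]

theorem IsIncenter.notMem_of_mem_segment (h : IsIncenter T o) (hT : IsTriad T) (hd : d ∈ T)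
    (hx : x ∈ hull T) (hxd : x ∉ d.set) (hy : y ∈ segment ℝ o x) : y ∉ d.set := by
  rw [Disk.mem_set, not_le, dist_eq_norm] at hxd ⊢
  refine lt_norm_of_mem_segment d.radius_pos hT.inradius_pos ?_
    (h.radius_mul_norm_le hT hd hx) hxd ?_
  · rw [← dist_eq_norm, h.dist_sq d hd]
  · rw [← mem_segment_translate ℝ d.center]
    simpa using hy

theorem IsIncenter.mem_hole (h : IsIncenter T o) (hT : IsTriad T) : o ∈ hole T := by
  refine ⟨h.mem_hull, fun ho => ?_⟩
  obtain ⟨d, hd, hod⟩ := mem_packingUnion.1 ho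
  have := pow_le_pow_left₀ dist_nonneg (Disk.mem_set.1 hod) 2
  rw [h.dist_sq d hd] at this
  linarith [pow_pos hT.inradius_pos 2]

theorem IsIncenter.starConvex_hole (h : IsIncenter T o) (hT : IsTriad T) :
    StarConvex ℝ o (hole T) := by
  rw [starConvex_iff_segment_subset]
  rintro x ⟨hx, hxT⟩ y hy
  refine ⟨(hull_convex T).segment_subset h.mem_hull hx hy, fun hyT => ?_⟩
  obtain ⟨d, hd, hyd⟩ := mem_packingUnion.1 hyT
  exact h.notMem_of_mem_segment hT hd hx (fun hxd => hxT (mem_packingUnion.2 ⟨d, hd, hxd⟩)) hy hyd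

theorem IsTriad.isPreconnected_hole (hT : IsTriad T) : IsPreconnected (hole T) :=
  let ⟨_, h⟩ := hT.exists_isIncenter
  ((h.starConvex_hole hT).isPathConnected (h.mem_hole hT)).isConnected.isPreconnected

theorem IsTriad.closure_hole_inter (hT : IsTriad T) (hd : d ∈ T) :
    (closure (hole T) ∩ d.set).Nonempty := by
  obtain ⟨o, ho⟩ := hT.exists_isIncenter
  have hcover : segment ℝ o d.center ⊆ closure (hole T) ∪ d.set := by
    intro y hy
    by_cases hyd : y ∈ d.set
    · exact .inr hyd
    refine .inl (subset_closure ⟨(hull_convex T).segment_subset ho.mem_hull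
      (center_mem_hull hd) hy, fun hyT => ?_⟩)
    obtain ⟨e, he, hye⟩ := mem_packingUnion.1 hyT
    have hde : e.Tangent d := hT.tangent he hd (by rintro rfl; exact hyd hye)
    refine ho.notMem_of_mem_segment hT he (center_mem_hull hd) ?_ hy hye
    rw [Disk.mem_set, dist_comm, hde]
    linarith [d.radius_pos]
  obtain ⟨y, -, hy⟩ := isPreconnected_closed_iff.1 (convex_segment o d.center).isPreconnected _ _
    isClosed_closure d.isClosed hcover
    ⟨o, left_mem_segment ℝ _ _, subset_closure (ho.mem_hole hT)⟩
    ⟨d.center, right_mem_segment ℝ _ _, d.center_mem⟩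
  exact ⟨y, hy⟩

theorem exists_affineBasis_of_tangent (hde : d.Tangent e) (hdf : d.Tangent f)
    (hef : e.Tangent f) :
    ∃ b : AffineBasis (Fin 3) ℝ Plane, ⇑b = ![d.center, e.center, f.center] := by
  have hwbtw : ∀ {u v w : Disk}, u.Tangent v → v.Tangent w → u.Tangent w →
      ¬ Wbtw ℝ u.center v.center w.center := by
    intro u v w huv hvw huw h
    have := h.dist_add_dist
    rw [huv, hvw, huw] at this
    linarith [v.radius_pos]
  have hind : AffineIndependent ℝ ![d.center, e.center, f.center] := by
    rw [affineIndependent_iff_not_collinear_set]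
    intro hcol
    rcases hcol.wbtw_or_wbtw_or_wbtw with h | h | h
    · exact hwbtw hde hef hdf h
    · exact hwbtw hef hdf.symm hde.symm h
    · exact hwbtw hdf.symm hde hef.symm h
  exact ⟨⟨_, hind, hind.affineSpan_eq_top_iff_card_eq_finrank_add_one.2 (by simp)⟩, rfl⟩

theorem exists_eq_smul_add_smul (hde : d.Tangent e) (hdf : d.Tangent f) (hef : e.Tangent f)
    (v : Plane) : ∃ p q : ℝ, v = p • (e.center - d.center) + q • (f.center - d.center) := by
  obtain ⟨b, hb⟩ := exists_affineBasis_of_tangent hde hdf hef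
  have hsum := b.sum_coord_apply_eq_one (v + d.center)
  have hcomb := b.linear_combination_coord_eq_self (v + d.center)
  simp only [Fin.sum_univ_three, hb, Matrix.cons_val] at hsum hcomb
  refine ⟨b.coord 1 (v + d.center), b.coord 2 (v + d.center), ?_⟩
  rw [eq_sub_of_add_eq (eq_sub_of_add_eq hsum)] at hcomb
  refine (eq_sub_of_add_eq hcomb.symm).trans ?_
  module

theorem IsIncenter.mem_hull_of_mem_disk (h : IsIncenter T o) (hT : IsTriad T) (hd : d ∈ T)
    (hxd : x ∈ d.set) (hcone : d.radius * ‖x - d.center‖ ≤ ⟪x - d.center, o - d.center⟫) :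
    x ∈ hull T := by
  obtain ⟨e, f, hde, hdf, hef, rfl⟩ := hT.exists_eq hd
  have := d.radius_pos
  have := e.radius_pos
  have := f.radius_pos
  obtain ⟨p, q, hpq⟩ := exists_eq_smul_add_smul hde hdf hef (x - d.center)
  obtain ⟨hp, hq⟩ : 0 ≤ p ∧ 0 ≤ q := by
    refine nonneg_of_norm_smul_add_smul_le (inner_sub_center_lt hde hdf hef) ?_
    rw [← hpq]
    refine le_of_mul_le_mul_left (hcone.trans_eq ?_) d.radius_pos
    rw [hpq, inner_add_left, real_inner_smul_left, real_inner_smul_left,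
      h.inner_sub_center hd (by simp) hde, h.inner_sub_center hd (by simp) hdf, hde.norm_sub,
      hdf.norm_sub]
    ring
  have hnorm : ((p + q) * d.radius) ^ 2 ≤ d.radius ^ 2 := calc
    _ ≤ ‖x - d.center‖ ^ 2 := by
      rw [hpq, norm_smul_add_smul_sq, _root_.inner_sub_center hde hdf hef, hde.norm_sub,
        hdf.norm_sub]
      have : 0 ≤ 2 * d.radius * (p + q) * (p * e.radius + q * f.radius) := by positivity
      linarith [sq_nonneg (p * e.radius - q * f.radius)]
    _ ≤ _ := pow_le_pow_left₀ (norm_nonneg _) (by rwa [← dist_eq_norm]) 2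
  have hsum : p + q ≤ 1 := by
    have := le_of_sq_le_sq hnorm d.radius_pos.le
    nlinarith
  refine mem_hull_triple.2 ⟨1 - p - q, p, q, by linarith, hp, hq, by ring, ?_⟩
  rw [← sub_add_cancel x d.center, hpq]
  module

theorem IsTriad.frontier_hull_subset (hT : IsTriad T) (hx : x ∈ frontier (hull T)) :
    ∃ d ∈ T, ∃ e ∈ T, d.Tangent e ∧ x ∈ segment ℝ d.center e.center := by
  obtain ⟨d, hd⟩ := hT.nonempty
  obtain ⟨e, f, hde, hdf, hef, rfl⟩ := hT.exists_eq hd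
  obtain ⟨b, hb⟩ := exists_affineBasis_of_tangent hde hdf hef
  have hrange : hull {d, e, f} = convexHull ℝ (range b) := by
    simp only [hull, hb, image_insert_eq, image_singleton, Matrix.range_cons,
      Matrix.range_empty, union_empty, singleton_union]
  rw [frontier, hT.isClosed_hull.closure_eq, hrange, b.interior_convexHull,
    b.convexHull_eq_nonneg_coord] at hx
  have hsum := b.sum_coord_apply_eq_one x
  have hcomb := b.linear_combination_coord_eq_self x
  simp only [mem_sdiff, mem_ofPred_eq, not_forall, not_lt, Fin.sum_univ_three, hb,
    Matrix.cons_val] at hx hsum hcomb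
  obtain ⟨hnonneg, i, hi⟩ := hx
  have hi : b.coord i x = 0 := le_antisymm hi (hnonneg i)
  fin_cases i
  · refine ⟨e, by simp, f, by simp, hef, _, _, hnonneg 1, hnonneg 2, ?_, ?_⟩ <;> simp_all
  · refine ⟨d, by simp, f, by simp, hdf, _, _, hnonneg 0, hnonneg 2, ?_, ?_⟩ <;> simp_all
  · refine ⟨d, by simp, e, by simp, hde, _, _, hnonneg 0, hnonneg 1, ?_, ?_⟩ <;> simp_all

theorem IsTriad.frontier_hull_subset_packingUnion (hT : IsTriad T) :
    frontier (hull T) ⊆ packingUnion T := by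
  intro x hx
  obtain ⟨d, hd, e, he, hde, hxde⟩ := hT.frontier_hull_subset hx
  rw [mem_packingUnion]
  rcases hde.segment_subset hxde with h | h
  exacts [⟨d, hd, h⟩, ⟨e, he, h⟩]

end Triads

section Components

variable {X : Type*} [TopologicalSpace X] {s t : Set X}

theorem subset_of_isPreconnected_of_disjoint_frontier (hs : IsPreconnected s)
    (hst : (s ∩ t).Nonempty) (h : Disjoint s (frontier t)) : s ⊆ t := by
  have hcover : s ⊆ interior t ∪ (closure t)ᶜ := by
    intro x hx
    by_cases hxt : x ∈ closure t
    · exact .inl (by_contra fun hxi => h.notMem_of_mem_left hx ⟨hxt, hxi⟩)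
    · exact .inr hxt
  refine (hs.subset_left_of_subset_union isOpen_interior isClosed_closure.isOpen_compl ?_ hcover
    ?_).trans interior_subset
  · exact disjoint_compl_right.mono_left (interior_subset.trans subset_closure)
  · obtain ⟨x, hxs, hxt⟩ := hst
    exact ⟨x, hxs, (hcover hxs).resolve_right fun hx => hx (subset_closure hxt)⟩

theorem frontier_connectedComponentIn_subset [LocallyConnectedSpace X] (hs : IsOpen s) (x : X) :
    frontier (connectedComponentIn s x) ⊆ sᶜ := by
  intro y hy hys
  have hopen := hs.connectedComponentIn (x := y)
  have hyy := mem_connectedComponentIn hys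
  obtain ⟨z, hzy, hzx⟩ := mem_closure_iff.1 hy.1 _ hopen hyy
  rw [connectedComponentIn_eq hzy, ← connectedComponentIn_eq hzx] at hyy
  exact hy.2 (hs.connectedComponentIn.interior_eq.symm ▸ hyy)

end Components

/-! ### Uniform packings -/

/-- A packing whose radii lie between `δ > 0` and `M`; it is locally finite. -/
structure IsUniformPacking (P : Set Disk) (δ M : ℝ) : Prop where
  isPacking : IsPacking P
  pos : 0 < δ
  radius_mem : ∀ d ∈ P, d.radius ∈ Icc δ M

section UniformPackings

variable {P Q : Set Disk} {δ M : ℝ} {d e : Disk} {x z : Plane}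

theorem IsPacking.radius_add_radius_le_dist (h : IsPacking P) (hd : d ∈ P) (he : e ∈ P)
    (hde : d ≠ e) : d.radius + e.radius ≤ dist d.center e.center :=
  isPacking_iff.1 h hd he hde

theorem IsPacking.mem_segment (h : IsPacking P) (hd : d ∈ P) (he : e ∈ P) (hde : d ≠ e)
    (hxd : x ∈ d.set) (hxe : x ∈ e.set) : x ∈ segment ℝ d.center e.center := by
  rw [mem_segment_iff_wbtw, ← dist_add_dist_eq_iff]
  refine le_antisymm ?_ (dist_triangle _ _ _)
  rw [dist_comm d.center x]
  exact (add_le_add hxd hxe).trans (h.radius_add_radius_le_dist hd he hde)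

theorem IsUniformPacking.mono (h : IsUniformPacking P δ M) (hQ : Q ⊆ P) :
    IsUniformPacking Q δ M where
  isPacking d hd e he := h.isPacking d (hQ hd) e (hQ he)
  pos := h.pos
  radius_mem d hd := h.radius_mem d (hQ hd)

theorem IsUniformPacking.finite_inter_closedBall (h : IsUniformPacking P δ M) (x : Plane) (R : ℝ) :
    {d ∈ P | (d.set ∩ closedBall x R).Nonempty}.Finite := by
  obtain ⟨t, -, ht, hcover⟩ :=
    finite_cover_balls_of_compact (isCompact_closedBall x (R + M)) h.pos
  have hsub : ∀ y, {d ∈ P | d.center ∈ ball y δ}.Subsingleton := by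
    rintro y d ⟨hd, hdy⟩ e ⟨he, hey⟩
    by_contra hde
    linarith [h.isPacking.radius_add_radius_le_dist hd he hde, (h.radius_mem d hd).1,
      (h.radius_mem e he).1, dist_triangle_right d.center e.center y, mem_ball.1 hdy,
      mem_ball.1 hey]
  refine (ht.biUnion fun y _ => (hsub y).finite).subset ?_
  rintro d ⟨hd, z, hzd, hzx⟩
  have hdx : d.center ∈ closedBall x (R + M) := by
    rw [mem_closedBall]
    linarith [dist_triangle_left d.center x z, Disk.mem_set.1 hzd, mem_closedBall.1 hzx,
      (h.radius_mem d hd).2]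
  obtain ⟨y, hy, hdy⟩ := mem_iUnion₂.1 (hcover hdx)
  exact mem_iUnion₂.2 ⟨y, hy, hd, hdy⟩

theorem IsUniformPacking.locallyFinite (h : IsUniformPacking P δ M) :
    LocallyFinite fun d : P => d.1.set := by
  refine fun x => ⟨closedBall x 1, closedBall_mem_nhds x one_pos, ?_⟩
  refine ((h.finite_inter_closedBall x 1).preimage Subtype.val_injective.injOn).subset ?_
  exact fun d hd => ⟨d.2, hd⟩

theorem IsUniformPacking.isClosed_packingUnion (h : IsUniformPacking P δ M) :
    IsClosed (packingUnion P) := by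
  rw [packingUnion, biUnion_eq_iUnion]
  exact h.locallyFinite.isClosed_iUnion fun d => d.1.isClosed

theorem IsUniformPacking.isOpen_compl_packingUnion (h : IsUniformPacking P δ M) :
    IsOpen (packingUnion P)ᶜ := h.isClosed_packingUnion.isOpen_compl

theorem IsUniformPacking.countable (h : IsUniformPacking P δ M) : P.Countable :=
  countable_univ_iff.1 (h.locallyFinite.countable_univ fun d => ⟨d.1.center, d.1.center_mem⟩)

/-- General position with respect to a packing: `x` lies on no line through two centers and (the
case `d = e`, where the line degenerates) is not a center. -/
def IsGeneric (P : Set Disk) (x : Plane) : Prop :=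
  ∀ d ∈ P, ∀ e ∈ P, x ∉ line[ℝ, d.center, e.center]

theorem IsUniformPacking.ae_isGeneric (h : IsUniformPacking P δ M) :
    ∀ᵐ x : Plane, IsGeneric P x := by
  refine (ae_ball_iff h.countable).2 fun d _ => (ae_ball_iff h.countable).2 fun e _ => ?_
  refine measure_eq_zero_iff_ae_notMem.1 (Measure.addHaar_affineSubspace _ _ fun htop => ?_)
  have hrank := collinear_iff_finrank_le_one.1 (collinear_pair ℝ d.center e.center)
  rw [← direction_affineSpan, htop, AffineSubspace.direction_top, finrank_top] at hrank
  simp at hrank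

theorem IsGeneric.eq_of_mem (hx : IsGeneric P x) (h : IsPacking P) (hd : d ∈ P) (he : e ∈ P)
    (hxd : x ∈ d.set) (hxe : x ∈ e.set) : d = e := by
  by_contra hde
  exact hx d hd e he ((mem_segment_iff_wbtw.1 (h.mem_segment hd he hde hxd hxe)).mem_affineSpan)

theorem IsGeneric.exists_radial_projection (hx : IsGeneric P x) (h : IsPacking P) (hd : d ∈ P)
    (hxd : x ∈ d.set) : ∃ z, dist z d.center = d.radius ∧
      (∃ s ∈ Icc (0 : ℝ) 1, x = AffineMap.lineMap d.center z s) ∧ ∀ e ∈ P, z ∈ e.set → e = d := by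
  have hxc : x ≠ d.center := by
    rintro rfl
    exact hx d hd d hd (left_mem_affineSpan_pair ℝ _ _)
  have hpos : 0 < dist d.center x := dist_pos.2 hxc.symm
  obtain ⟨z, hz⟩ : ∃ z, z = AffineMap.lineMap d.center x (d.radius / dist d.center x) := ⟨_, rfl⟩
  have hxz : x = AffineMap.lineMap d.center z (dist d.center x / d.radius) := by
    have := d.radius_pos
    rw [hz, AffineMap.lineMap_lineMap_right, div_mul_div_cancel₀ this.ne', div_self hpos.ne',
      AffineMap.lineMap_apply_one]
  have hzd : dist z d.center = d.radius := by
    rw [hz, dist_lineMap_left, Real.norm_of_nonneg (by have := d.radius_pos; positivity),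
      div_mul_cancel₀ _ hpos.ne']
  refine ⟨z, hzd, ⟨_, ⟨by have := d.radius_pos; positivity, ?_⟩, hxz⟩, fun e he hze => ?_⟩
  · rw [div_le_one d.radius_pos, dist_comm]
    exact hxd
  · by_contra hed
    have hline := (mem_segment_iff_wbtw.1
      (h.mem_segment hd he (Ne.symm hed) hzd.le hze)).mem_affineSpan
    refine hx d hd e he ?_
    rw [hxz]
    exact AffineMap.lineMap_mem _ (left_mem_affineSpan_pair ℝ _ _) hline

theorem IsUniformPacking.eventually_lineMap_notMem (h : IsUniformPacking P δ M)
    (hzd : dist z d.center = d.radius) (hz : ∀ e ∈ P, z ∈ e.set → e = d) :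
    ∀ᶠ t in 𝓝[>] (1 : ℝ), AffineMap.lineMap d.center z t ∉ packingUnion P := by
  have hz' : z ∉ packingUnion (P \ {d}) := fun hzP => by
    obtain ⟨e, he, hze⟩ := mem_packingUnion.1 hzP
    exact he.2 (hz e he.1 hze)
  have hopen := (h.mono (sdiff_subset : P \ {d} ⊆ P)).isOpen_compl_packingUnion
  have hcont : ContinuousAt (AffineMap.lineMap d.center z : ℝ → Plane) 1 :=
    AffineMap.lineMap_continuous.continuousAt
  have hother := hcont.eventually (hopen.mem_nhds (by simpa using hz'))
  filter_upwards [nhdsWithin_le_nhds hother, self_mem_nhdsWithin] with t ht (h1 : 1 < t) htP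
  obtain ⟨e, he, hte⟩ := mem_packingUnion.1 htP
  rcases eq_or_ne e d with rfl | hed
  · rw [Disk.mem_set, dist_lineMap_left, dist_comm, hzd, Real.norm_of_nonneg (by linarith)] at hte
    nlinarith [e.radius_pos]
  · exact ht (mem_packingUnion.2 ⟨e, ⟨he, hed⟩, hte⟩)

end UniformPackings

/-! ### Faces of a compact packing -/

/-- A triad of disks of `P` whose hole meets no disk of `P`; the holes of the faces of a compact
packing are the components of the complement of its disks. -/
structure IsFace (P T : Set Disk) : Prop where
  subset : T ⊆ P
  isTriad : IsTriad T
  hole_subset : hole T ⊆ (packingUnion P)ᶜ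

section Faces

variable {P T T' : Set Disk} {δ M : ℝ} {d : Disk} {x y z : Plane}

theorem IsTriad.exists_ray (hT : IsTriad T) (hy : y ∉ hull T) (hyT : y ∉ packingUnion T) :
    ∃ n : Plane, n ≠ 0 ∧ ∀ t : ℝ, 0 ≤ t → y + t • n ∉ packingUnion T := by
  obtain ⟨d, hd⟩ := hT.nonempty
  obtain ⟨p, hp, hmin⟩ := exists_norm_eq_iInf_of_complete_convex ⟨_, center_mem_hull hd⟩
    hT.isCompact_hull.isComplete (hull_convex T) y
  rw [norm_eq_iInf_iff_real_inner_le_zero (hull_convex T) hp] at hmin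
  refine ⟨y - p, sub_ne_zero.2 (by rintro rfl; exact hy hp), fun t ht hmem => ?_⟩
  obtain ⟨e, he, hmem⟩ := mem_packingUnion.1 hmem
  refine hyT (mem_packingUnion.2 ⟨e, he, Disk.mem_set.2 (le_trans ?_ hmem)⟩)
  have hinner : 0 ≤ ⟪y - e.center, y - p⟫ := by
    have := hmin _ (center_mem_hull he)
    have hsq : 0 ≤ ⟪y - p, y - p⟫ := real_inner_self_nonneg
    simp only [inner_sub_left, inner_sub_right, real_inner_comm] at this hsq ⊢
    linarith
  rw [dist_eq_norm, dist_eq_norm, ← sq_le_sq₀ (norm_nonneg _) (norm_nonneg _), add_sub_right_comm,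
    norm_add_sq_real, real_inner_smul_right]
  nlinarith [mul_nonneg ht hinner, sq_nonneg ‖t • (y - p)‖]

theorem not_isBounded_of_ray_subset {s : Set Plane} {n : Plane} (hn : n ≠ 0)
    (h : ∀ t : ℝ, 0 ≤ t → y + t • n ∈ s) : ¬ Bornology.IsBounded s := by
  intro hs
  obtain ⟨R, hR⟩ := hs.subset_closedBall y
  have hpos : 0 < ‖n‖ := norm_pos_iff.2 hn
  have hmem := hR (h ((|R| + 1) / ‖n‖) (by positivity))
  rw [mem_closedBall, dist_eq_norm, add_sub_cancel_left, norm_smul,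
    Real.norm_of_nonneg (by positivity), div_mul_cancel₀ _ hpos.ne'] at hmem
  linarith [le_abs_self R]

theorem IsCompactPacking.exists_isFace (hP : IsCompactPacking P) (h : IsUniformPacking P δ M)
    (hx : x ∉ packingUnion P) :
    ∃ T, IsFace P T ∧ connectedComponentIn (packingUnion P)ᶜ x = hole T ∧
      ∀ d ∈ P, (closure (hole T) ∩ d.set).Nonempty → d ∈ T := by
  obtain ⟨hbdd, d, e, f, -, -, -, -, -, -, hde, hdf, hef, hmeet⟩ := hP.2 x hx
  set C := connectedComponentIn (packingUnion P)ᶜ x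
  have hT : IsTriad {d, e, f} := isTriad_of_tangent hde hdf hef
  have hsub : {d, e, f} ⊆ P := hmeet ▸ sep_subset _ _
  have hCP : C ⊆ (packingUnion P)ᶜ := connectedComponentIn_subset _ _
  have hCT : Disjoint C (packingUnion {d, e, f}) :=
    disjoint_compl_left.mono hCP (packingUnion_mono hsub)
  have hfrontier : frontier C ⊆ packingUnion {d, e, f} := by
    intro y hy
    obtain ⟨g, hg, hyg⟩ := mem_packingUnion.1
      (not_not.1 (frontier_connectedComponentIn_subset h.isOpen_compl_packingUnion x hy))
    exact mem_packingUnion.2 ⟨g, hmeet ▸ ⟨hg, y, hy.1, hyg⟩, hyg⟩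
  have hhull : C ⊆ hull {d, e, f} := by
    intro y hy
    by_contra hyT
    obtain ⟨n, hn, hray⟩ := hT.exists_ray hyT (hCT.notMem_of_mem_left hy)
    refine not_isBounded_of_ray_subset (y := y) hn (fun t ht => ?_) hbdd
    refine subset_of_isPreconnected_of_disjoint_frontier
      (s := (fun t : ℝ => y + t • n) '' Ici 0) (isPreconnected_Ici.image _ (by fun_prop)) ?_ ?_
      ⟨t, ht, rfl⟩
    · exact ⟨y, ⟨0, self_mem_Ici, by simp⟩, hy⟩
    · rw [disjoint_left]
      rintro _ ⟨t, ht, rfl⟩ hmem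
      exact hray t ht (hfrontier hmem)
  have hhole : C = hole {d, e, f} := by
    have hCsub : C ⊆ hole {d, e, f} := fun y hy => ⟨hhull hy, hCT.notMem_of_mem_left hy⟩
    have hxC : x ∈ C := mem_connectedComponentIn hx
    exact hCsub.antisymm (subset_of_isPreconnected_of_disjoint_frontier hT.isPreconnected_hole
      ⟨x, hCsub hxC, hxC⟩ (disjoint_sdiff_left.mono_right hfrontier))
  exact ⟨_, ⟨hsub, hT, hhole ▸ hCP⟩, hhole, fun g hg hg' => hmeet ▸ ⟨hg, hhole ▸ hg'⟩⟩

theorem IsFace.eq_of_mem_hole (hP : IsCompactPacking P) (h : IsUniformPacking P δ M)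
    (hT : IsFace P T) (hT' : IsFace P T') (hx : x ∈ hole T) (hx' : x ∈ hole T') : T = T' := by
  obtain ⟨T₀, hT₀, hcomp, hmeet⟩ := hP.exists_isFace h (hT.hole_subset hx)
  have key : ∀ {S}, IsFace P S → x ∈ hole S → S = T₀ := by
    intro S hS hxS
    have hsub : hole S ⊆ hole T₀ :=
      hcomp ▸ hS.isTriad.isPreconnected_hole.subset_connectedComponentIn hxS hS.hole_subset
    refine hS.isTriad.finite.eq_of_subset_of_encard_le (fun d hd => hmeet d (hS.subset hd) ?_) ?_
    · exact (hS.isTriad.closure_hole_inter hd).mono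
        (inter_subset_inter_left _ (closure_mono hsub))
    · rw [hS.isTriad.encard_eq, hT₀.isTriad.encard_eq]
  rw [key hT hx, key hT' hx']

theorem IsFace.mem_of_mem_hull (h : IsPacking P) (hT : IsFace P T) (hx : IsGeneric P x)
    (hxT : x ∈ hull T) (hd : d ∈ P) (hxd : x ∈ d.set) : d ∈ T := by
  have hxU : x ∈ packingUnion T := by
    by_contra hxU
    exact hT.hole_subset ⟨hxT, hxU⟩ (mem_packingUnion.2 ⟨d, hd, hxd⟩)
  obtain ⟨e, he, hxe⟩ := mem_packingUnion.1 hxU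
  rwa [hx.eq_of_mem h hd (hT.subset he) hxd hxe]

theorem IsCompactPacking.exists_isFace_of_isGeneric (hP : IsCompactPacking P)
    (h : IsUniformPacking P δ M) (hx : IsGeneric P x) (hd : d ∈ P) (hxd : x ∈ d.set) :
    ∃ T, IsFace P T ∧ d ∈ T ∧ x ∈ hull T := by
  obtain ⟨z, hzd, ⟨s, hs, rfl⟩, hz⟩ := hx.exists_radial_projection h.isPacking hd hxd
  obtain ⟨ε, hε, hfree⟩ := mem_nhdsGT_iff_exists_Ioo_subset.1 (h.eventually_lineMap_notMem hzd hz)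
  have hε : 1 < ε := hε
  obtain ⟨t, ht⟩ := nonempty_Ioo.2 hε
  obtain ⟨T, hT, hcomp, hmeet⟩ := hP.exists_isFace h (hfree ht)
  have hsub : (AffineMap.lineMap d.center z : ℝ → Plane) '' Ioo 1 ε ⊆ hole T := hcomp ▸
    (isPreconnected_Ioo.image _ AffineMap.lineMap_continuous.continuousOn
      ).subset_connectedComponentIn ⟨t, ht, rfl⟩ (image_subset_iff.2 hfree)
  have hz : z ∈ closure (hole T) := by
    have h1 : (1 : ℝ) ∈ closure (Ioo 1 ε) := by
      rw [closure_Ioo hε.ne]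
      exact left_mem_Icc.2 hε.le
    have := image_closure_subset_closure_image (AffineMap.lineMap_continuous (R := ℝ)
      (p := d.center) (q := z)) ⟨1, h1, AffineMap.lineMap_apply_one _ _⟩
    exact closure_mono hsub this
  have hdT : d ∈ T := hmeet d hd ⟨z, hz, hzd.le⟩
  refine ⟨T, hT, hdT, (hull_convex T).lineMap_mem (center_mem_hull hdT) ?_ hs⟩
  exact closure_minimal sdiff_subset hT.isTriad.isClosed_hull hz

theorem IsFace.eventually_lineMap_mem_hole (h : IsUniformPacking P δ M) (hT : IsFace P T)
    (hd : d ∈ T) {s : ℝ} (hs : 0 ≤ s) (hx : IsGeneric P (AffineMap.lineMap d.center z s))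
    (hxT : AffineMap.lineMap d.center z s ∈ hull T) (hzd : dist z d.center = d.radius)
    (hz : ∀ e ∈ P, z ∈ e.set → e = d) :
    ∀ᶠ t in 𝓝[>] (1 : ℝ), AffineMap.lineMap d.center z t ∈ hole T := by
  obtain ⟨o, ho⟩ := hT.isTriad.exists_isIncenter
  have hs : 0 < s := hs.lt_of_ne' (by
    rintro rfl
    exact hx d (hT.subset hd) d (hT.subset hd) (by simp))
  have hzT : z ∈ hull T := by
    refine ho.mem_hull_of_mem_disk hT.isTriad hd hzd.le ?_
    have hcone := ho.radius_mul_norm_le hT.isTriad hd hxT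
    rw [← vsub_eq_sub, AffineMap.lineMap_vsub_left, vsub_eq_sub, norm_smul,
      Real.norm_of_nonneg hs.le, real_inner_smul_left, mul_left_comm] at hcone
    exact le_of_mul_le_mul_left hcone hs
  have hzi : z ∈ interior (hull T) := by
    by_contra hzi
    obtain ⟨e, he, f, hf, hef, hzef⟩ := hT.isTriad.frontier_hull_subset ⟨subset_closure hzT, hzi⟩
    have hline : z ∈ line[ℝ, e.center, f.center] := (mem_segment_iff_wbtw.1 hzef).mem_affineSpan
    refine hx e (hT.subset he) f (hT.subset hf) (AffineMap.lineMap_mem _ ?_ hline)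
    rcases hef.segment_subset hzef with hze | hzf
    · exact hz e (hT.subset he) hze ▸ left_mem_affineSpan_pair ℝ _ _
    · exact hz f (hT.subset hf) hzf ▸ right_mem_affineSpan_pair ℝ _ _
  have hcont : ContinuousAt (AffineMap.lineMap d.center z : ℝ → Plane) 1 :=
    AffineMap.lineMap_continuous.continuousAt
  have hnhds := hcont.eventually (isOpen_interior.mem_nhds (by simpa using hzi))
  filter_upwards [nhdsWithin_le_nhds hnhds, h.eventually_lineMap_notMem hzd hz] with t ht htP
  exact ⟨interior_subset ht, fun htT => htP (packingUnion_mono hT.subset htT)⟩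

theorem IsFace.eq_of_mem_hull (hP : IsCompactPacking P) (h : IsUniformPacking P δ M)
    (hT : IsFace P T) (hT' : IsFace P T') (hx : IsGeneric P x) (hxT : x ∈ hull T)
    (hxT' : x ∈ hull T') : T = T' := by
  by_cases hxP : x ∈ packingUnion P
  · obtain ⟨d, hd, hxd⟩ := mem_packingUnion.1 hxP
    have hdT := hT.mem_of_mem_hull h.isPacking hx hxT hd hxd
    have hdT' := hT'.mem_of_mem_hull h.isPacking hx hxT' hd hxd
    obtain ⟨z, hzd, ⟨s, hs, rfl⟩, hz⟩ := hx.exists_radial_projection h.isPacking hd hxd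
    obtain ⟨t, ht, ht'⟩ := ((hT.eventually_lineMap_mem_hole h hdT hs.1 hx hxT hzd hz).and
      (hT'.eventually_lineMap_mem_hole h hdT' hs.1 hx hxT' hzd hz)).exists
    exact hT.eq_of_mem_hole hP h hT' ht ht'
  · exact hT.eq_of_mem_hole hP h hT' ⟨hxT, fun hmem => hxP (packingUnion_mono hT.subset hmem)⟩
      ⟨hxT', fun hmem => hxP (packingUnion_mono hT'.subset hmem)⟩

end Faces

/-! ### Angles and areas -/

section Sectors

variable {R α : ℝ}

theorem mul_cos_le_mul_cos_iff (hα₀ : 0 ≤ α) (hα : α < Real.pi) {r θ : ℝ} (hr : 0 < r)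
    (hθ : θ ∈ Ioo (-Real.pi) Real.pi) : r * Real.cos α ≤ r * Real.cos θ ↔ θ ∈ Icc (-α) α := by
  rw [mul_le_mul_iff_of_pos_left hr, ← Real.cos_abs θ, mem_Icc, ← abs_le]
  exact Real.strictAntiOn_cos.le_iff_ge ⟨hα₀, hα.le⟩ ⟨abs_nonneg θ, (abs_lt.2 hθ).le⟩

theorem lintegral_ofReal_fst_Ioc_prod_Icc (hR : 0 ≤ R) (α : ℝ) :
    ∫⁻ p in Ioc 0 R ×ˢ Icc (-α) α, ENNReal.ofReal p.1 = ENNReal.ofReal (R ^ 2 * α) := by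
  have hfst : ∫⁻ r in Ioc 0 R, ENNReal.ofReal r = ENNReal.ofReal (R ^ 2 / 2) := by
    rw [← ofReal_integral_eq_lintegral_ofReal]
    · rw [← intervalIntegral.integral_of_le hR, integral_id]
      simp
    · exact continuous_id.integrableOn_Icc.mono_set Ioc_subset_Icc_self
    · filter_upwards [ae_restrict_mem measurableSet_Ioc] with r hr using hr.1.le
  rw [Measure.volume_eq_prod, ← Measure.prod_restrict, lintegral_prod _ (by fun_prop)]
  simp only [lintegral_const, Measure.restrict_apply_univ, Real.volume_Icc]
  rw [lintegral_mul_const _ (by fun_prop), hfst, ← ENNReal.ofReal_mul (by positivity)]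
  congr 1
  ring

theorem volume_complex_sector (hR : 0 ≤ R) (hα₀ : 0 ≤ α) (hα : α < Real.pi) :
    volume {z : ℂ | ‖z‖ ≤ R ∧ ‖z‖ * Real.cos α ≤ z.re} = ENNReal.ofReal (R ^ 2 * α) := by
  set S := {z : ℂ | ‖z‖ ≤ R ∧ ‖z‖ * Real.cos α ≤ z.re}
  have hS : MeasurableSet S := ((isClosed_le continuous_norm continuous_const).inter
    (isClosed_le (continuous_norm.mul continuous_const) Complex.continuous_re)).measurableSet
  have hbox : MeasurableSet (Ioc 0 R ×ˢ Icc (-α) α) := measurableSet_Ioc.prod measurableSet_Icc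
  have hmem : ∀ p ∈ polarCoord.target,
      Complex.polarCoord.symm p ∈ S ↔ p ∈ Ioc 0 R ×ˢ Icc (-α) α := by
    rintro ⟨r, θ⟩ ⟨hr : 0 < r, hθ⟩
    have hre : (Complex.polarCoord.symm (r, θ)).re = r * Real.cos θ := by
      rw [Complex.polarCoord_symm_apply, Complex.re_ofReal_mul]
      simp [-Complex.ofReal_cos, -Complex.ofReal_sin]
    simp only [S, mem_ofPred_eq, Complex.norm_polarCoord_symm, hre, abs_of_pos hr, mem_prod,
      mem_Ioc, mul_cos_le_mul_cos_iff hα₀ hα hr hθ, hr, true_and]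
  calc volume S
      = ∫⁻ p in polarCoord.target,
          ENNReal.ofReal p.1 • S.indicator 1 (Complex.polarCoord.symm p) := by
        rw [Complex.lintegral_comp_polarCoord_symm, lintegral_indicator_one hS]
    _ = ∫⁻ p in polarCoord.target,
          (Ioc 0 R ×ˢ Icc (-α) α).indicator (fun p => ENNReal.ofReal p.1) p := by
        refine setLIntegral_congr_fun polarCoord.open_target.measurableSet fun p hp => ?_
        by_cases h : p ∈ Ioc 0 R ×ˢ Icc (-α) α
        · rw [indicator_of_mem h, indicator_of_mem ((hmem p hp).2 h), Pi.one_apply, smul_eq_mul,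
            mul_one]
        · rw [indicator_of_notMem h, indicator_of_notMem (mt (hmem p hp).1 h), smul_zero]
    _ = ∫⁻ p in Ioc 0 R ×ˢ Icc (-α) α, ENNReal.ofReal p.1 := by
        rw [setLIntegral_indicator hbox, inter_eq_left.2]
        rintro ⟨r, θ⟩ ⟨hr, hθ⟩
        exact ⟨hr.1, by linarith [hθ.1], by linarith [hθ.2]⟩
    _ = ENNReal.ofReal (R ^ 2 * α) := lintegral_ofReal_fst_Ioc_prod_Icc hR α

theorem exists_linearIsometryEquiv_complex {w : Plane} (hw : w ≠ 0) :
    ∃ φ : Plane ≃ₗᵢ[ℝ] ℂ, ∀ u, (φ u).re * ‖w‖ = ⟪u, w⟫ := by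
  have hw' : ‖w‖ ≠ 0 := norm_ne_zero_iff.2 hw
  have hortho : Orthonormal ℝ (({0} : Set (Fin 2)).domRestrict fun _ => ‖w‖⁻¹ • w) := by
    refine ⟨fun _ => ?_, fun i j hij => absurd (Subsingleton.elim i j) hij⟩
    simp [norm_smul, hw']
  obtain ⟨b, hb⟩ := hortho.exists_orthonormalBasis_extension_of_card_eq (by simp)
  refine ⟨b.repr.trans Complex.orthonormalBasisOneI.repr.symm, fun u => ?_⟩
  have hre : (Complex.orthonormalBasisOneI.repr.symm (b.repr u)).re = ⟪b 0, u⟫ := by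
    simp [b.repr_apply_apply]
  rw [LinearIsometryEquiv.trans_apply, hre, hb 0 rfl, real_inner_smul_left, real_inner_comm]
  field_simp

theorem volume_sector {w : Plane} (hw : w ≠ 0) (hR : 0 ≤ R) (hα₀ : 0 ≤ α) (hα : α < Real.pi) :
    volume {u : Plane | ‖u‖ ≤ R ∧ ‖u‖ * (‖w‖ * Real.cos α) ≤ ⟪u, w⟫}
      = ENNReal.ofReal (R ^ 2 * α) := by
  obtain ⟨φ, hφ⟩ := exists_linearIsometryEquiv_complex hw
  rw [← volume_complex_sector hR hα₀ hα, ← φ.measurePreserving.measure_preimage_emb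
    φ.toHomeomorph.measurableEmbedding]
  congr 1
  ext u
  rw [mem_preimage, mem_ofPred_eq, mem_ofPred_eq, φ.norm_map, ← hφ, mul_left_comm, mul_comm _ ‖w‖,
    mul_le_mul_iff_of_pos_left (norm_pos_iff.2 hw)]

theorem norm_mul_cos_arctan {a ρ ν : ℝ} (ha : 0 < a) (hν : 0 ≤ ν) (h : ν ^ 2 = a ^ 2 + ρ ^ 2) :
    ν * Real.cos (Real.arctan (ρ / a)) = a := by
  rw [Real.cos_arctan, div_pow, one_add_div (by positivity), ← h, Real.sqrt_div (by positivity),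
    Real.sqrt_sq hν, Real.sqrt_sq ha.le]
  have : ν ≠ 0 := by
    rintro rfl
    nlinarith [sq_nonneg ρ, pow_pos ha 2]
  field_simp

end Sectors

section Triads

variable {T : Set Disk} {d e f : Disk}

theorem IsTriad.volume_hull_inter (hT : IsTriad T) (hd : d ∈ T) :
    volume (hull T ∩ d.set)
      = ENNReal.ofReal (d.radius ^ 2 * Real.arctan (inradius T / d.radius)) := by
  obtain ⟨o, ho⟩ := hT.exists_isIncenter
  have hdist : ‖o - d.center‖ ^ 2 = d.radius ^ 2 + inradius T ^ 2 := by
    rw [← dist_eq_norm, ho.dist_sq d hd]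
  have hne : o - d.center ≠ 0 := by
    intro h0
    rw [h0, norm_zero] at hdist
    nlinarith [d.radius_pos, sq_nonneg (inradius T)]
  have hangle : 0 ≤ Real.arctan (inradius T / d.radius) :=
    Real.arctan_nonneg.2 (div_nonneg hT.inradius_pos.le d.radius_pos.le)
  rw [← volume_sector hne d.radius_pos.le hangle
      ((Real.arctan_lt_pi_div_two _).trans (half_lt_self Real.pi_pos)),
    norm_mul_cos_arctan d.radius_pos (norm_nonneg _) hdist,
    ← measure_preimage_add_right _ d.center]
  congr 1
  ext x
  rw [mem_preimage, mem_inter_iff, mem_ofPred_eq, Disk.mem_set, dist_eq_norm, add_sub_cancel_right,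
    mul_comm, and_comm, and_congr_right_iff]
  refine fun hx => ⟨fun hmem => ?_, fun hcone => ho.mem_hull_of_mem_disk hT hd ?_ ?_⟩
  · simpa using ho.radius_mul_norm_le hT hd hmem
  · simpa [Disk.mem_set] using hx
  · simpa using hcone

theorem volume_parallelepiped_sq (v : Fin 2 → Plane) : (volume (parallelepiped v)).toReal ^ 2
    = ‖v 0‖ ^ 2 * ‖v 1‖ ^ 2 - ⟪v 0, v 1⟫ ^ 2 := by
  have := Measure.addHaar_parallelepiped (EuclideanSpace.basisFun (Fin 2) ℝ).toBasis v
  rw [OrthonormalBasis.addHaar_eq_volume] at this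
  rw [this, ENNReal.toReal_ofReal (abs_nonneg _), sq_abs, Basis.det_apply, Matrix.det_fin_two]
  simp [Basis.toMatrix_apply, EuclideanSpace.norm_sq_eq, Fin.sum_univ_two, PiLp.inner_apply]
  ring

theorem parallelepiped_subset_hull_triple :
    parallelepiped ![e.center - d.center, f.center - d.center] ⊆
      (· + d.center) ⁻¹' hull {d, e, f} ∪
        (e.center + f.center - d.center - ·) ⁻¹' hull {d, e, f} := by
  intro x hx
  obtain ⟨t, ⟨ht0, ht1⟩, rfl⟩ := (mem_parallelepiped_iff _ _).1 hx
  have ht0 : ∀ i, 0 ≤ t i := ht0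
  have ht1 : ∀ i, t i ≤ 1 := ht1
  rw [Fin.sum_univ_two, mem_union, mem_preimage, mem_preimage, mem_hull_triple, mem_hull_triple]
  simp only [Matrix.cons_val]
  rcases le_total (t 0 + t 1) 1 with h | h
  · exact .inl ⟨1 - t 0 - t 1, t 0, t 1, by linarith, ht0 0, ht0 1, by ring, by module⟩
  · exact .inr ⟨t 0 + t 1 - 1, 1 - t 0, 1 - t 1, by linarith, by linarith [ht1 0],
      by linarith [ht1 1], by ring, by module⟩

theorem volume_parallelepiped_le (hT : IsTriad {d, e, f}) :
    volume (parallelepiped ![e.center - d.center, f.center - d.center])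
      ≤ 2 * volume (hull {d, e, f}) := by
  have hmeas := hT.isClosed_hull.measurableSet.nullMeasurableSet (μ := volume)
  refine (measure_mono parallelepiped_subset_hull_triple).trans ((measure_union_le _ _).trans ?_)
  rw [measure_preimage_add_right, two_mul,
    (Measure.measurePreserving_sub_left volume _).measure_preimage hmeas]

theorem finsum_mem_triple {ι M : Type*} [AddCommMonoid M] {i j k : ι} (hij : i ≠ j) (hik : i ≠ k)
    (hjk : j ≠ k) (g : ι → M) : ∑ᶠ x ∈ ({i, j, k} : Set ι), g x = g i + g j + g k := by
  rw [finsum_mem_insert _ (by simp [hij, hik]) (toFinite _), finsum_mem_pair hjk, add_assoc]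

theorem IsTriad.ofReal_le_volume_hull (hT : IsTriad T) :
    ENNReal.ofReal (inradius T * ∑ᶠ d ∈ T, d.radius) ≤ volume (hull T) := by
  obtain ⟨d, hd⟩ := hT.nonempty
  obtain ⟨e, f, hde, hdf, hef, rfl⟩ := hT.exists_eq hd
  have := d.radius_pos
  have := e.radius_pos
  have := f.radius_pos
  have hρ := hT.inradius_pos
  have hsq := volume_parallelepiped_sq ![e.center - d.center, f.center - d.center]
  simp only [Matrix.cons_val] at hsq
  have harea : (volume (parallelepiped ![e.center - d.center, f.center - d.center])).toReal
      = 2 * (inradius {d, e, f} * (d.radius + e.radius + f.radius)) := by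
    rw [← sq_eq_sq₀ ENNReal.toReal_nonneg (by positivity), hsq, inner_sub_center hde hdf hef,
      hde.norm_sub, hdf.norm_sub, mul_pow, mul_pow, inradius_triple_sq hde.ne hdf.ne hef.ne]
    field_simp
    ring
  have hle := volume_parallelepiped_le hT
  rw [finsum_mem_triple hde.ne hdf.ne hef.ne]
  refine (ENNReal.mul_le_mul_iff_right two_ne_zero ENNReal.ofNat_ne_top).1 (le_trans ?_ hle)
  calc 2 * ENNReal.ofReal (inradius {d, e, f} * (d.radius + e.radius + f.radius))
      = ENNReal.ofReal (2 * (inradius {d, e, f} * (d.radius + e.radius + f.radius))) := by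
        rw [ENNReal.ofReal_mul zero_le_two, ENNReal.ofReal_ofNat]
    _ ≤ volume (parallelepiped ![e.center - d.center, f.center - d.center]) := by
        rw [← harea]
        exact ENNReal.ofReal_toReal_le

end Triads

section Faces

variable {P T : Set Disk} {δ M K R : ℝ} {d : Disk} {x y : Plane}

theorem IsCompactPacking.pairwise_aedisjoint_hull (hP : IsCompactPacking P)
    (h : IsUniformPacking P δ M) :
    {T | IsFace P T}.Pairwise (Function.onFun (AEDisjoint volume) hull) := by
  intro T hT T' hT' hne
  rw [Function.onFun, AEDisjoint, measure_eq_zero_iff_ae_notMem]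
  filter_upwards [h.ae_isGeneric] with x hx hxT
  exact hne (hT.eq_of_mem_hull hP h hT' hx hxT.1 hxT.2)

theorem IsUniformPacking.countable_setOf_isFace (h : IsUniformPacking P δ M) :
    {T | IsFace P T}.Countable :=
  (countable_ofPred_finite_subset h.countable).mono fun T (hT : IsFace P T) =>
    And.intro hT.isTriad.finite hT.subset

theorem IsUniformPacking.finite_setOf_isFace_mem (h : IsUniformPacking P δ M) (hd : d ∈ P) :
    {T | IsFace P T ∧ d ∈ T}.Finite := by
  refine (h.finite_inter_closedBall d.center (d.radius + M)).finite_subsets.subset ?_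
  rintro T ⟨hT, hdT⟩ e he
  refine ⟨hT.subset he, e.center, e.center_mem, ?_⟩
  rw [mem_closedBall]
  have heM := (h.radius_mem e (hT.subset he)).2
  rcases eq_or_ne e d with rfl | hed
  · rw [dist_self]
    linarith [e.radius_pos]
  · rw [hT.isTriad.tangent he hdT hed]
    linarith

/-- The triangles at a disk fill it, so their angles there sum to `2π`. -/
theorem IsCompactPacking.finsum_arctan_eq_pi (hP : IsCompactPacking P) (h : IsUniformPacking P δ M)
    (hd : d ∈ P) :
    ∑ᶠ T ∈ {T | IsFace P T ∧ d ∈ T}, Real.arctan (inradius T / d.radius) = Real.pi := by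
  have hfin := h.finite_setOf_isFace_mem hd
  have hcover : (⋃ T ∈ hfin.toFinset, hull T ∩ d.set) =ᵐ[volume] d.set := by
    filter_upwards [h.ae_isGeneric] with x hx
    refine propext ⟨fun hmem => ?_, fun hxd => ?_⟩
    · obtain ⟨T, -, hT⟩ := mem_iUnion₂.1 hmem
      exact hT.2
    · obtain ⟨T, hT, hdT, hxT⟩ := hP.exists_isFace_of_isGeneric h hx hd hxd
      exact mem_iUnion₂.2 ⟨T, hfin.mem_toFinset.2 ⟨hT, hdT⟩, hxT, hxd⟩
  have hnonneg : ∀ T ∈ hfin.toFinset,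
      0 ≤ d.radius ^ 2 * Real.arctan (inradius T / d.radius) := fun T hT =>
    mul_nonneg (sq_nonneg _) (Real.arctan_nonneg.2
      (div_nonneg (hfin.mem_toFinset.1 hT).1.isTriad.inradius_pos.le d.radius_pos.le))
  have hsum : ENNReal.ofReal (d.radius ^ 2 * Real.pi) = ENNReal.ofReal
      (d.radius ^ 2 * ∑ T ∈ hfin.toFinset, Real.arctan (inradius T / d.radius)) := calc
    _ = volume d.set := by
      rw [Disk.set, EuclideanSpace.volume_closedBall_fin_two, ENNReal.ofReal_mul (by positivity),
        ENNReal.ofReal_pow d.radius_pos.le]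
    _ = ∑ T ∈ hfin.toFinset, volume (hull T ∩ d.set) := by
      rw [← measure_congr hcover]
      refine measure_biUnion_finset₀ (fun T hT T' hT' hne => ?_) fun T hT => ?_
      · exact (hP.pairwise_aedisjoint_hull h (hfin.mem_toFinset.1 hT).1
          (hfin.mem_toFinset.1 hT').1 hne).mono inter_subset_left inter_subset_left
      · exact ((hfin.mem_toFinset.1 hT).1.isTriad.isClosed_hull.inter
          d.isClosed).measurableSet.nullMeasurableSet
    _ = _ := by
      rw [Finset.mul_sum, ENNReal.ofReal_sum_of_nonneg hnonneg]
      exact Finset.sum_congr rfl fun T hT =>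
        (hfin.mem_toFinset.1 hT).1.isTriad.volume_hull_inter (hfin.mem_toFinset.1 hT).2
  rw [finsum_mem_eq_finite_toFinset_sum _ hfin]
  have hr := pow_pos d.radius_pos 2
  rw [ENNReal.ofReal_eq_ofReal_iff (by positivity)
    (by rw [Finset.mul_sum]; exact Finset.sum_nonneg hnonneg)] at hsum
  exact (mul_left_cancel₀ hr.ne' hsum).symm

theorem volume_square (hR : 0 ≤ R) : volume (square R) = ENNReal.ofReal (4 * R ^ 2) := by
  have hmp : MeasurePreserving (fun v : Plane => (v 0, v 1)) volume volume :=
    (volume_preserving_finTwoArrow ℝ).comp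
      (EuclideanSpace.volume_preserving_symm_measurableEquiv_toLp (Fin 2))
  have hpre : square R = (fun v : Plane => (v 0, v 1)) ⁻¹' (Icc (-R) R ×ˢ Icc (-R) R) := by
    ext x
    simp only [square, mem_ofPred_eq, abs_le, mem_preimage, mem_prod, mem_Icc]
  rw [hpre, hmp.measure_preimage (measurableSet_Icc.prod measurableSet_Icc).nullMeasurableSet,
    Measure.volume_eq_prod, Measure.prod_prod, Real.volume_Icc, ← ENNReal.ofReal_mul (by linarith)]
  congr 1
  ring

theorem mem_square_add_of_dist_le {c : ℝ} (hx : x ∈ square R) (h : dist y x ≤ c) :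
    y ∈ square (R + c) := by
  have hcoord : ∀ i, |y i| ≤ |x i| + c := fun i => by
    have hi : |y i - x i| ≤ c := by
      simpa [dist_eq_norm] using (PiLp.norm_apply_le (y - x) i).trans (dist_eq_norm y x ▸ h)
    linarith [abs_sub_abs_le_abs_sub (y i) (x i)]
  exact ⟨(hcoord 0).trans (by linarith [hx.1]), (hcoord 1).trans (by linarith [hx.2])⟩

theorem IsFace.dist_le (h : IsUniformPacking P δ M) (hT : IsFace P T) (hx : x ∈ hull T)
    (hy : y ∈ hull T) : dist x y ≤ 2 * M := by
  obtain ⟨d, hd⟩ := hT.isTriad.nonempty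
  refine (dist_le_diam_of_mem hT.isTriad.isCompact_hull.isBounded hx hy).trans ?_
  rw [hull, convexHull_diam]
  have hM : ∀ e ∈ T, 0 < e.radius ∧ e.radius ≤ M := fun e he =>
    ⟨e.radius_pos, (h.radius_mem e (hT.subset he)).2⟩
  refine diam_le_of_forall_dist_le (by linarith [hM d hd]) ?_
  rintro _ ⟨e, he, rfl⟩ _ ⟨f, hf, rfl⟩
  rcases eq_or_ne e f with rfl | hef
  · rw [dist_self]
    linarith [hM e he]
  · rw [hT.isTriad.tangent he hf hef]
    linarith [hM e he, hM f hf]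

/-- The area of the triangle of a triad that is covered by its three disks. -/
noncomputable def coveredArea (T : Set Disk) : ℝ :=
  ∑ᶠ d ∈ T, d.radius ^ 2 * Real.arctan (inradius T / d.radius)

/-- The area of the triangle of a triad: its inradius times its semiperimeter. -/
noncomputable def hullArea (T : Set Disk) : ℝ := inradius T * ∑ᶠ d ∈ T, d.radius

theorem IsTriad.volume_hull_inter_packingUnion_le (hT : IsTriad T) :
    volume (hull T ∩ packingUnion T) ≤ ENNReal.ofReal (coveredArea T) := by
  rw [packingUnion, inter_iUnion₂, coveredArea, finsum_mem_eq_finite_toFinset_sum _ hT.finite,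
    ENNReal.ofReal_sum_of_nonneg fun d _ => mul_nonneg (sq_nonneg _) (Real.arctan_nonneg.2
      (div_nonneg hT.inradius_pos.le d.radius_pos.le))]
  calc volume (⋃ d ∈ T, hull T ∩ d.set)
      = volume (⋃ d ∈ hT.finite.toFinset, hull T ∩ d.set) := by simp
    _ ≤ ∑ d ∈ hT.finite.toFinset, volume (hull T ∩ d.set) := measure_biUnion_finset_le _ _
    _ = _ := Finset.sum_congr rfl fun d hd => hT.volume_hull_inter (hT.finite.mem_toFinset.1 hd)

theorem IsCompactPacking.volume_inter_square_le (hP : IsCompactPacking P)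
    (h : IsUniformPacking P δ M) (hM : 0 ≤ M) (hK : 0 ≤ K)
    (hdensity : ∀ T, IsFace P T → coveredArea T ≤ K * hullArea T) (hR : 0 ≤ R) :
    volume (packingUnion P ∩ square R) ≤ ENNReal.ofReal (K * (4 * (R + 2 * M) ^ 2)) := by
  let F := {T | IsFace P T ∧ (hull T ∩ square R).Nonempty}
  have hFcount : F.Countable := h.countable_setOf_isFace.mono fun T hT => hT.1
  have hcover : (packingUnion P ∩ square R : Set Plane) ≤ᵐ[volume]
      (⋃ T ∈ F, hull T ∩ packingUnion T : Set Plane) := by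
    filter_upwards [h.ae_isGeneric] with x hx ⟨hxP, hxR⟩
    obtain ⟨d, hd, hxd⟩ := mem_packingUnion.1 hxP
    obtain ⟨T, hT, hdT, hxT⟩ := hP.exists_isFace_of_isGeneric h hx hd hxd
    exact mem_iUnion₂.2 ⟨T, ⟨hT, x, hxT, hxR⟩, hxT, mem_packingUnion.2 ⟨d, hdT, hxd⟩⟩
  have hface : ∀ T : F, volume (hull T ∩ packingUnion T) ≤ ENNReal.ofReal K * volume (hull T) :=
    fun ⟨T, hT, _⟩ => calc volume (hull T ∩ packingUnion T)
      _ ≤ ENNReal.ofReal (coveredArea T) := hT.isTriad.volume_hull_inter_packingUnion_le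
      _ ≤ ENNReal.ofReal (K * hullArea T) := ENNReal.ofReal_le_ofReal (hdensity T hT)
      _ = ENNReal.ofReal K * ENNReal.ofReal (hullArea T) := ENNReal.ofReal_mul hK
      _ ≤ ENNReal.ofReal K * volume (hull T) := by
        gcongr
        exact hT.isTriad.ofReal_le_volume_hull
  have hsquare : (⋃ T ∈ F, hull T) ⊆ square (R + 2 * M) := by
    refine iUnion₂_subset fun T ⟨hT, x, hxT, hxR⟩ y hy => ?_
    exact mem_square_add_of_dist_le hxR (hT.dist_le h hy hxT)
  calc volume (packingUnion P ∩ square R)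
      ≤ ∑' T : F, volume (hull T ∩ packingUnion T) :=
        (measure_mono_ae hcover).trans (measure_biUnion_le _ hFcount _)
    _ ≤ ∑' T : F, ENNReal.ofReal K * volume (hull T) := ENNReal.tsum_le_tsum hface
    _ = ENNReal.ofReal K * volume (⋃ T ∈ F, hull T) := by
        rw [ENNReal.tsum_mul_left, measure_biUnion₀ hFcount
          ((hP.pairwise_aedisjoint_hull h).mono fun T hT => hT.1)
          fun T hT => hT.1.isTriad.isClosed_hull.measurableSet.nullMeasurableSet]
    _ ≤ ENNReal.ofReal K * volume (square (R + 2 * M)) := by gcongr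
    _ = _ := by rw [volume_square (by linarith), ← ENNReal.ofReal_mul hK]

theorem IsCompactPacking.density_le (hP : IsCompactPacking P) (h : IsUniformPacking P δ M)
    (hM : 0 ≤ M) (hK : 0 ≤ K) (hdensity : ∀ T, IsFace P T → coveredArea T ≤ K * hullArea T) :
    density P ≤ K := by
  refine le_of_forall_gt_imp_ge_of_dense fun K' hK' => Filter.limsup_le_of_le ?_ ?_
  · exact Filter.isCoboundedUnder_le_of_le _ (x := 0) fun R =>
      div_nonneg ENNReal.toReal_nonneg (by positivity)
  have hlim : Filter.Tendsto (fun R : ℝ => K * (1 + 2 * M * R⁻¹) ^ 2) Filter.atTop (𝓝 K) := by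
    simpa using (((tendsto_inv_atTop_zero.const_mul (2 * M)).const_add 1).pow 2).const_mul K
  filter_upwards [hlim.eventually_lt_const hK', Filter.eventually_gt_atTop 0] with R hR hR₀
  rw [div_le_iff₀ (by positivity)]
  calc (volume (packingUnion P ∩ square R)).toReal
      ≤ K * (4 * (R + 2 * M) ^ 2) := ENNReal.toReal_le_of_le_ofReal (by positivity)
        (hP.volume_inter_square_le h hM hK hdensity hR₀.le)
    _ = K * (1 + 2 * M * R⁻¹) ^ 2 * (4 * R ^ 2) := by field_simp
    _ ≤ K' * (4 * R ^ 2) := by gcongr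

end Faces

/-! ### Half-angles -/

section HalfAngles

variable {a b c q y z L U α β γ ρ K : ℝ}

theorem abs_arctan_sub_taylor_le (y : ℝ) :
    |Real.arctan y - (y - y ^ 3 / 3 + y ^ 5 / 5)| ≤ |y| ^ 7 / 7 := by
  have hderiv (x : ℝ) : HasDerivAt (fun y : ℝ => Real.arctan y - (y - y ^ 3 / 3 + y ^ 5 / 5))
      (-x ^ 6 / (1 + x ^ 2)) x := by
    have h3 := (hasDerivAt_pow 3 x).div_const 3
    have h5 := (hasDerivAt_pow 5 x).div_const 5
    refine ((Real.hasDerivAt_arctan x).sub (((hasDerivAt_id x).sub h3).add h5)).congr_deriv ?_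
    field_simp
    ring
  have hpow (x : ℝ) : HasDerivAt (fun y : ℝ => y ^ 7 / 7) (x ^ 6) x :=
    ((hasDerivAt_pow 7 x).div_const 7).congr_deriv (by norm_num)
  have hle (x : ℝ) : x ^ 6 / (1 + x ^ 2) ≤ x ^ 6 :=
    div_le_self (by positivity) (by linarith [sq_nonneg x])
  have hadd : Monotone fun y : ℝ => y ^ 7 / 7 + (Real.arctan y - (y - y ^ 3 / 3 + y ^ 5 / 5)) :=
    monotone_of_hasDerivAt_nonneg (fun x => (hpow x).add (hderiv x)) fun x => by
      simp only [Pi.zero_apply, neg_div]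
      linarith [hle x]
  have hsub : Monotone fun y : ℝ => y ^ 7 / 7 - (Real.arctan y - (y - y ^ 3 / 3 + y ^ 5 / 5)) :=
    monotone_of_hasDerivAt_nonneg (fun x => (hpow x).sub (hderiv x)) fun x => by
      simp only [Pi.zero_apply, neg_div]
      have : 0 ≤ x ^ 6 / (1 + x ^ 2) := by positivity
      have : 0 ≤ x ^ 6 := by positivity
      linarith
  rw [abs_le]
  rcases le_total 0 y with hy | hy
  · have h₁ := hadd hy
    have h₂ := hsub hy
    norm_num at h₁ h₂
    rw [abs_of_nonneg hy]
    constructor <;> linarith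
  · have h₁ := hadd hy
    have h₂ := hsub hy
    norm_num at h₁ h₂
    rw [abs_of_nonpos hy, Odd.neg_pow (by decide)]
    constructor <;> linarith

theorem arctan_div_eq_pi_div_four_add (hy : y < 1) :
    Real.arctan ((1 + y) / (1 - y)) = Real.pi / 4 + Real.arctan y := by
  rw [← Real.arctan_one, Real.arctan_add (by linarith), one_mul]

/-- For a triad of radii `a`, `b`, `c`, half of the angle of the triangle of centers at the center
of the disk of radius `a`; it is `arctan (ρ / a)` where `ρ` is the inradius. -/
noncomputable def halfAngle (a b c : ℝ) : ℝ := Real.arctan √(b * c / (a * (a + b + c)))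

theorem halfAngle_comm (a b c : ℝ) : halfAngle a b c = halfAngle a c b := by
  rw [halfAngle, halfAngle, mul_comm b, add_right_comm]

theorem halfAngle_le_arctan (ha : 0 < a) (hb : 0 < b) (hc : 0 < c) (hq : 0 ≤ q)
    (h : b * c ≤ q ^ 2 * (a * (a + b + c))) : halfAngle a b c ≤ Real.arctan q :=
  Real.arctan_mono <| Real.sqrt_le_iff.2 ⟨hq, (div_le_iff₀ (by positivity)).2 h⟩

theorem arctan_le_halfAngle (ha : 0 < a) (hb : 0 < b) (hc : 0 < c)
    (h : q ^ 2 * (a * (a + b + c)) ≤ b * c) : Real.arctan q ≤ halfAngle a b c :=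
  Real.arctan_mono <| Real.le_sqrt_of_sq_le ((le_div_iff₀ (by positivity)).2 h)

theorem halfAngle_le_of_taylor_le (ha : 0 < a) (hb : 0 < b) (hc : 0 < c) (hq : 0 ≤ q)
    (h : b * c ≤ q ^ 2 * (a * (a + b + c))) (hU : q - q ^ 3 / 3 + q ^ 5 / 5 + q ^ 7 / 7 ≤ U) :
    halfAngle a b c ≤ U := by
  have := abs_le.1 (abs_arctan_sub_taylor_le q)
  rw [abs_of_nonneg hq] at this
  linarith [halfAngle_le_arctan ha hb hc hq h]

theorem halfAngle_le_of_shift_taylor_le (ha : 0 < a) (hb : 0 < b) (hc : 0 < c) (hy : -1 < y)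
    (hy' : y < 1) (h : b * c * (1 - y) ^ 2 ≤ (1 + y) ^ 2 * (a * (a + b + c)))
    (hU : 0.7853983 + (y - y ^ 3 / 3 + y ^ 5 / 5 + |y| ^ 7 / 7) ≤ U) : halfAngle a b c ≤ U := by
  have hy₁ : 0 < 1 - y := by linarith
  have hle : halfAngle a b c ≤ Real.arctan ((1 + y) / (1 - y)) :=
    halfAngle_le_arctan ha hb hc (div_nonneg (by linarith) hy₁.le) <| by
      rwa [div_pow, div_mul_eq_mul_div, le_div_iff₀ (by positivity)]
  rw [arctan_div_eq_pi_div_four_add hy'] at hle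
  linarith [abs_le.1 (abs_arctan_sub_taylor_le y), Real.pi_lt_d6]

theorem le_halfAngle_of_le_shift_taylor (ha : 0 < a) (hb : 0 < b) (hc : 0 < c) (hy : y < 1)
    (h : (1 + y) ^ 2 * (a * (a + b + c)) ≤ b * c * (1 - y) ^ 2)
    (hL : L ≤ 0.785398 + (y - y ^ 3 / 3 + y ^ 5 / 5 - |y| ^ 7 / 7)) : L ≤ halfAngle a b c := by
  have : 0 < 1 - y := by linarith
  have hle : Real.arctan ((1 + y) / (1 - y)) ≤ halfAngle a b c :=
    arctan_le_halfAngle ha hb hc <| by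
      rwa [div_pow, div_mul_eq_mul_div, div_le_iff₀ (by positivity)]
  rw [arctan_div_eq_pi_div_four_add hy] at hle
  linarith [abs_le.1 (abs_arctan_sub_taylor_le y), Real.pi_gt_d6]

theorem halfAngle_mem_Icc_of_taylor (ha : 0 < a) (hb : 0 < b) (hc : 0 < c) (hy : y < 1)
    (hz : -1 < z) (hz' : z < 1) (h : (1 + y) ^ 2 * (a * (a + b + c)) ≤ b * c * (1 - y) ^ 2)
    (h' : b * c * (1 - z) ^ 2 ≤ (1 + z) ^ 2 * (a * (a + b + c)))
    (hL : L ≤ 0.785398 + (y - y ^ 3 / 3 + y ^ 5 / 5 - |y| ^ 7 / 7))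
    (hU : 0.7853983 + (z - z ^ 3 / 3 + z ^ 5 / 5 + |z| ^ 7 / 7) ≤ U) :
    halfAngle a b c ∈ Icc L U :=
  ⟨le_halfAngle_of_le_shift_taylor ha hb hc hy h hL,
    halfAngle_le_of_shift_taylor_le ha hb hc hz hz' h' hU⟩

/-- The density of the disks in the triangle of a triad of radii `a`, `b`, `c`. -/
noncomputable def triadDensity (a b c : ℝ) : ℝ :=
  (a ^ 2 * halfAngle a b c + b ^ 2 * halfAngle b c a + c ^ 2 * halfAngle c a b) /
    (√(a * b * c / (a + b + c)) * (a + b + c))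

theorem triadDensity_le (ha : 0 < a) (hb : 0 < b) (hc : 0 < c) (hα : halfAngle a b c ≤ α)
    (hβ : halfAngle b c a ≤ β) (hγ : halfAngle c a b ≤ γ) (hρ : ρ ^ 2 * (a + b + c) ≤ a * b * c)
    (hK : 0 ≤ K) (h : a ^ 2 * α + b ^ 2 * β + c ^ 2 * γ ≤ K * (ρ * (a + b + c))) :
    triadDensity a b c ≤ K := by
  have hρ' : ρ ≤ √(a * b * c / (a + b + c)) :=
    Real.le_sqrt_of_sq_le ((le_div_iff₀ (by positivity)).2 hρ)
  rw [triadDensity, div_le_iff₀ (by positivity)]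
  calc _ ≤ a ^ 2 * α + b ^ 2 * β + c ^ 2 * γ := by gcongr
    _ ≤ K * (ρ * (a + b + c)) := h
    _ ≤ _ := by gcongr

variable {d e f : Disk}

theorem arctan_inradius_div (hde : d ≠ e) (hdf : d ≠ f) (hef : e ≠ f) :
    Real.arctan (inradius {d, e, f} / d.radius) = halfAngle d.radius e.radius f.radius := by
  have := d.radius_pos
  have := e.radius_pos
  have := f.radius_pos
  rw [halfAngle, inradius_triple hde hdf hef, ← Real.sqrt_sq d.radius_pos.le, ← Real.sqrt_div' _
    (sq_nonneg _), Real.sqrt_sq d.radius_pos.le]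
  congr 2
  field_simp

theorem coveredArea_eq_mul_hullArea (hde : d ≠ e) (hdf : d ≠ f) (hef : e ≠ f) :
    coveredArea {d, e, f} =
      triadDensity d.radius e.radius f.radius * hullArea {d, e, f} := by
  have := d.radius_pos
  have := e.radius_pos
  have := f.radius_pos
  have he : ({d, e, f} : Set Disk) = {e, f, d} := by grind
  have hf : ({d, e, f} : Set Disk) = {f, d, e} := by grind
  rw [coveredArea, hullArea, finsum_mem_triple hde hdf hef, finsum_mem_triple hde hdf hef,
    arctan_inradius_div hde hdf hef, he, arctan_inradius_div hef hde.symm hdf.symm, ← he, hf,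
    arctan_inradius_div hdf.symm hef.symm hde, ← hf, inradius_triple hde hdf hef, triadDensity,
    div_mul_cancel₀ _ (by positivity)]

end HalfAngles

/-! ### The special radii -/

/-- The conditions on the radii `r`, `s` that make the packing of `IsTriangulatedDesign`
triangulated; the interval selects a root `s` of the equation obtained by eliminating the other
dimensions of the packing. -/
structure IsSpecialRadii (r s : ℝ) : Prop where
  mem_Icc : s ∈ Icc 0.151397 0.151398
  rel : r * (1 - s) = 2 * s * (1 + s)
  eq_zero : (1 + s + 2 * s ^ 2) ^ 2 * ((1 + 4 * s) * (3 + 4 * s)) -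
    4 * (1 + 2 * s) ^ 4 * (1 - s) ^ 2 = 0

theorem exists_isSpecialRadii : ∃ r s, IsSpecialRadii r s := by
  obtain ⟨s, hs, h⟩ := intermediate_value_Icc (a := (0.151397 : ℝ)) (b := 0.151398) (by norm_num)
    (f := fun s : ℝ => (1 + s + 2 * s ^ 2) ^ 2 * ((1 + 4 * s) * (3 + 4 * s)) -
      4 * (1 + 2 * s) ^ 4 * (1 - s) ^ 2) (by fun_prop)
    (show (0 : ℝ) ∈ _ by constructor <;> norm_num)
  exact ⟨2 * s * (1 + s) / (1 - s), s, hs, div_mul_cancel₀ _ (by linarith [hs.2]), h⟩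

theorem IsTriad.exists_radius_le {T : Set Disk} (h : IsTriad T) : ∃ d e f, d ≠ e ∧ d ≠ f ∧ e ≠ f ∧
    T = {d, e, f} ∧ e.radius ≤ d.radius ∧ f.radius ≤ e.radius := by
  obtain ⟨d, hd, hmax⟩ := exists_max_image T Disk.radius h.finite h.nonempty
  obtain ⟨e, f, hde, hdf, hef, rfl⟩ := h.exists_eq hd
  rcases le_total f.radius e.radius with hle | hle
  · exact ⟨d, e, f, hde.ne, hdf.ne, hef.ne, rfl, hmax e (by simp), hle⟩
  · exact ⟨d, f, e, hdf.ne, hde.ne, hef.ne.symm, by rw [pair_comm], hmax f (by simp), hle⟩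

/-- Lower bounds for the half-angles at a small disk of the triads whose two other radii are
`1, 1`; `1, r`; `1, s`; `r, r`; `r, s`; `s, s` in this order, in units of `10⁻⁴`. -/
def halfAngleLower : Fin 6 → ℕ := ![10521, 9216, 7194, 8193, 6490, 5235]

theorem eq_zero_of_sum_halfAngle {n : Fin 6 → ℕ} (h : ∑ k, n k * halfAngleLower k ≤ 31416)
    (h' : 31415 ≤ ∑ k, n k * (halfAngleLower k + 2)) : n 0 = 0 ∧ n 2 = 0 := by
  simp only [Fin.sum_univ_six, halfAngleLower, Matrix.cons_val] at h h'
  generalize n 0 = n₀, n 1 = n₁, n 2 = n₂, n 3 = n₃, n 4 = n₄, n 5 = n₅ at *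
  by_contra! hne
  have : n₀ ≤ 2 := by omega
  have : n₁ ≤ 3 := by omega
  have : n₂ ≤ 4 := by omega
  have : n₃ ≤ 3 := by omega
  have : n₄ ≤ 4 := by omega
  interval_cases n₀ <;> interval_cases n₂ <;> interval_cases n₁ <;> interval_cases n₃ <;>
    first | omega | interval_cases n₄ <;> omega

theorem kind_ne_of_sum_eq_pi {ι : Type*} {F : Finset ι} {θ : ι → ℝ} {kind : ι → Fin 6}
    (hθ : ∀ i ∈ F, 10000 * θ i ∈
      Icc (halfAngleLower (kind i) : ℝ) (halfAngleLower (kind i) + 2 : ℕ))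
    (hsum : ∑ i ∈ F, θ i = Real.pi) {i : ι} (hi : i ∈ F) : kind i ≠ 0 ∧ kind i ≠ 2 := by
  have hfiber (g : Fin 6 → ℕ) :
      ∑ k, (F.filter (kind · = k)).card * g k = ∑ i ∈ F, g (kind i) := by
    simp_rw [← Finset.sum_fiberwise' F kind g, Finset.sum_const, smul_eq_mul]
  have hlower : ((∑ i ∈ F, halfAngleLower (kind i) : ℕ) : ℝ) ≤ 10000 * Real.pi := by
    rw [← hsum, Finset.mul_sum, Nat.cast_sum]
    exact Finset.sum_le_sum fun i hi => (hθ i hi).1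
  have hupper : 10000 * Real.pi ≤ ((∑ i ∈ F, (halfAngleLower (kind i) + 2) : ℕ) : ℝ) := by
    rw [← hsum, Finset.mul_sum, Nat.cast_sum]
    exact Finset.sum_le_sum fun i hi => (hθ i hi).2
  have hπ : 10000 * Real.pi < (31417 : ℕ) := by
    norm_num
    linarith [Real.pi_lt_d4]
  have hπ' : ((31415 : ℕ) : ℝ) < 10000 * Real.pi := by
    norm_num
    linarith [Real.pi_gt_d4]
  have hcount := eq_zero_of_sum_halfAngle (n := fun k => (F.filter (kind · = k)).card)
    (by rw [hfiber]; exact Nat.lt_succ_iff.1 (by exact_mod_cast hlower.trans_lt hπ))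
    (by rw [hfiber fun k => halfAngleLower k + 2]; exact_mod_cast (hπ'.trans_le hupper).le)
  simp only [Finset.card_eq_zero, Finset.filter_eq_empty_iff] at hcount
  exact ⟨hcount.1 hi, hcount.2 hi⟩

namespace IsSpecialRadii

variable {r s : ℝ} {P T : Set Disk} {d e f : Disk} (h : IsSpecialRadii r s)

include h

theorem mem_Icc_right : r ∈ Icc 0.410835 0.410839 := by
  obtain ⟨⟨hs, hs'⟩, hrel, -⟩ := h
  constructor <;> nlinarith

theorem sq_mem_Icc : s ^ 2 ∈ Icc 0.02292105 0.02292136 := by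
  obtain ⟨⟨hs, hs'⟩, -, -⟩ := h
  constructor <;> nlinarith

theorem sq_right_mem_Icc : r ^ 2 ∈ Icc 0.1687853 0.1687887 := by
  obtain ⟨hr, hr'⟩ := h.mem_Icc_right
  constructor <;> nlinarith

theorem mul_mem_Icc : r * s ∈ Icc 0.0621991 0.0622003 := by
  obtain ⟨⟨hs, hs'⟩, -, -⟩ := id h
  obtain ⟨hr, hr'⟩ := h.mem_Icc_right
  constructor <;> nlinarith

theorem pos : 0 < s := by linarith [h.mem_Icc.1]

theorem pos_right : 0 < r := by linarith [h.mem_Icc_right.1]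

theorem lt : s < r := by linarith [h.mem_Icc.2, h.mem_Icc_right.1]

theorem lt_one : r < 1 := by linarith [h.mem_Icc_right.2]

theorem halfAngle_mem_Icc :
    halfAngle s 1 1 ∈ Icc 1.0521 1.0523 ∧ halfAngle s 1 r ∈ Icc 0.9216 0.9218 ∧
    halfAngle s 1 s ∈ Icc 0.7194 0.7196 ∧ halfAngle s r r ∈ Icc 0.8193 0.8195 ∧
    halfAngle s r s ∈ Icc 0.6490 0.6492 ∧ halfAngle s s s ∈ Icc 0.5235 0.5237 := by
  obtain ⟨hs, hs'⟩ := h.mem_Icc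
  obtain ⟨hr, hr'⟩ := h.mem_Icc_right
  obtain ⟨hss, hss'⟩ := h.sq_mem_Icc
  obtain ⟨hrr, hrr'⟩ := h.sq_right_mem_Icc
  obtain ⟨hrs, hrs'⟩ := h.mul_mem_Icc
  have hs₀ := h.pos
  have hr₀ := h.pos_right
  refine ⟨?_, ?_, ?_, ?_, ?_, ?_⟩
  · exact halfAngle_mem_Icc_of_taylor (y := 0.27326) (z := 0.27335) hs₀ one_pos one_pos
      (by norm_num) (by norm_num) (by norm_num) (by linarith) (by linarith)
      (by norm_num) (by norm_num)
  · exact halfAngle_mem_Icc_of_taylor (y := 0.13713) (z := 0.13721) hs₀ one_pos hr₀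
      (by norm_num) (by norm_num) (by norm_num) (by linarith) (by linarith)
      (by norm_num) (by norm_num)
  · exact halfAngle_mem_Icc_of_taylor (y := -0.06608) (z := -0.06599) hs₀ one_pos hs₀
      (by norm_num) (by norm_num) (by norm_num) (by linarith) (by linarith)
      (by norm_num) (by norm_num)
  · exact halfAngle_mem_Icc_of_taylor (y := 0.03395) (z := 0.03404) hs₀ hr₀ hr₀
      (by norm_num) (by norm_num) (by norm_num) (by linarith) (by linarith)
      (by norm_num) (by norm_num)
  · exact halfAngle_mem_Icc_of_taylor (y := -0.13722) (z := -0.13713) hs₀ hr₀ hs₀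
      (by norm_num) (by norm_num) (by norm_num) (by linarith) (by linarith)
      (by norm_num) (by norm_num)
  · exact halfAngle_mem_Icc_of_taylor (y := -0.268) (z := -0.2679) hs₀ hs₀ hs₀
      (by norm_num) (by norm_num) (by norm_num) (by linarith) (by linarith)
      (by norm_num) (by norm_num)

theorem mul_halfAngle_mem_Icc (k : Fin 6) :
    10000 * halfAngle s (![1, 1, 1, r, r, s] k) (![1, r, s, r, s, s] k) ∈
      Icc (halfAngleLower k : ℝ) (halfAngleLower k + 2 : ℕ) := by
  obtain ⟨⟨h₀, h₀'⟩, ⟨h₁, h₁'⟩, ⟨h₂, h₂'⟩, ⟨h₃, h₃'⟩, ⟨h₄, h₄'⟩, h₅, h₅'⟩ := h.halfAngle_mem_Icc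
  fin_cases k <;> simp [halfAngleLower] <;> constructor <;> linarith

theorem exists_halfAngle_mem_Icc {b c : ℝ} (hb : b ∈ ({1, r, s} : Set ℝ))
    (hc : c ∈ ({1, r, s} : Set ℝ)) : ∃ k : Fin 6, 10000 * halfAngle s b c ∈
      Icc (halfAngleLower k : ℝ) (halfAngleLower k + 2 : ℕ) ∧ (b = 1 → c ≠ r → k = 0 ∨ k = 2) := by
  have hr := h.lt_one.ne
  have hs := (h.lt.trans h.lt_one).ne
  rcases hb with hb | hb | hb <;> rcases hc with hc | hc | hc <;> rw [hb, hc]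
  · exact ⟨0, h.mul_halfAngle_mem_Icc 0, by simp⟩
  · exact ⟨1, h.mul_halfAngle_mem_Icc 1, by simp⟩
  · exact ⟨2, h.mul_halfAngle_mem_Icc 2, by simp⟩
  · exact ⟨1, halfAngle_comm s r 1 ▸ h.mul_halfAngle_mem_Icc 1, by simp [hr]⟩
  · exact ⟨3, h.mul_halfAngle_mem_Icc 3, by simp⟩
  · exact ⟨4, h.mul_halfAngle_mem_Icc 4, by simp [hr]⟩
  · exact ⟨2, halfAngle_comm s s 1 ▸ h.mul_halfAngle_mem_Icc 2, by simp⟩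
  · exact ⟨4, halfAngle_comm s s r ▸ h.mul_halfAngle_mem_Icc 4, by simp⟩
  · exact ⟨5, h.mul_halfAngle_mem_Icc 5, by simp [hs]⟩

theorem isUniformPacking (hP : IsPacking P) (hr : RadiiIn P {1, r, s}) :
    IsUniformPacking P s 1 where
  isPacking := hP
  pos := h.pos
  radius_mem d hd := by
    have := h.lt
    have := h.lt_one
    rcases hr d hd with hd | hd | hd <;> rw [hd] <;> constructor <;> linarith

theorem radius_eq_of_isFace (hP : IsCompactPacking P) (hr : RadiiIn P {1, r, s}) (hde : d ≠ e)
    (hdf : d ≠ f) (hef : e ≠ f) (hT : IsFace P {d, e, f}) (hd : d.radius = s)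
    (he : e.radius = 1) : f.radius = r := by
  by_contra hf
  have hfin := (h.isUniformPacking hP.1 hr).finite_setOf_isFace_mem (hT.subset (.inl rfl))
  have hsum := hP.finsum_arctan_eq_pi (h.isUniformPacking hP.1 hr) (hT.subset (.inl rfl))
  rw [finsum_mem_eq_finite_toFinset_sum _ hfin] at hsum
  set F := hfin.toFinset
  have hkind : ∀ T ∈ F, ∃ k : Fin 6, 10000 * Real.arctan (inradius T / d.radius) ∈
      Icc (halfAngleLower k : ℝ) (halfAngleLower k + 2 : ℕ) ∧
        (T = {d, e, f} → k = 0 ∨ k = 2) := fun T hTF => by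
    obtain ⟨hT', hdT⟩ := hfin.mem_toFinset.1 hTF
    by_cases hTT : T = {d, e, f}
    · rw [hTT, arctan_inradius_div hde hdf hef, hd]
      obtain ⟨k, hk, hbad⟩ :=
        h.exists_halfAngle_mem_Icc (hr e (hT.subset (by simp))) (hr f (hT.subset (by simp)))
      exact ⟨k, hk, fun _ => hbad he hf⟩
    · obtain ⟨a, b, hda, hdb, hab, rfl⟩ := hT'.isTriad.exists_eq hdT
      rw [arctan_inradius_div hda.ne hdb.ne hab.ne, hd]
      obtain ⟨k, hk, -⟩ :=
        h.exists_halfAngle_mem_Icc (hr a (hT'.subset (by simp))) (hr b (hT'.subset (by simp)))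
      exact ⟨k, hk, fun h => absurd h hTT⟩
  choose! kind hkind hkind' using hkind
  have hmem : ({d, e, f} : Set Disk) ∈ F := hfin.mem_toFinset.2 ⟨hT, .inl rfl⟩
  have := kind_ne_of_sum_eq_pi hkind hsum hmem
  grind

end IsSpecialRadii

theorem hullArea_nonneg (T : Set Disk) : 0 ≤ hullArea T :=
  mul_nonneg (Real.sqrt_nonneg _) (finsum_nonneg fun d => finsum_nonneg fun _ => d.radius_pos.le)

theorem triadDensity_self_le {a : ℝ} (ha : 0 < a) : triadDensity a a a ≤ 0.947 := by
  have hangle : halfAngle a a a ≤ 0.5295 :=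
    halfAngle_le_of_taylor_le (q := 0.57736) ha ha ha (by norm_num) (by nlinarith) (by norm_num)
  exact triadDensity_le (ρ := 0.577 * a) ha ha ha hangle hangle hangle
    (by nlinarith [pow_pos ha 3]) (by norm_num) (by nlinarith)

namespace IsSpecialRadii

variable {r s : ℝ} (h : IsSpecialRadii r s)
include h

theorem triadDensity_one_one_right_le : triadDensity 1 1 r ≤ 0.947 := by
  obtain ⟨hr, hr'⟩ := h.mem_Icc_right
  obtain ⟨hrr, hrr'⟩ := h.sq_right_mem_Icc
  have hr₀ := h.pos_right
  have h₁ : halfAngle 1 1 r ≤ 0.3925 :=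
    halfAngle_le_of_taylor_le (q := 0.4129) one_pos one_pos hr₀
      (by norm_num) (by linarith) (by norm_num)
  have hangle : halfAngle r 1 1 ≤ 0.7879 :=
    halfAngle_le_of_shift_taylor_le (y := 0.00247) hr₀ one_pos one_pos
      (by norm_num) (by norm_num) (by linarith) (by norm_num)
  exact triadDensity_le (ρ := 0.41275) one_pos one_pos hr₀ h₁ (halfAngle_comm 1 1 r ▸ h₁) hangle
    (by linarith) (by norm_num) (by linarith)

theorem triadDensity_one_right_right_le : triadDensity 1 r r ≤ 0.947 := by
  obtain ⟨hr, hr'⟩ := h.mem_Icc_right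
  obtain ⟨hrr, hrr'⟩ := h.sq_right_mem_Icc
  have hr₀ := h.pos_right
  have h₁ : halfAngle 1 r r ≤ 0.2959 :=
    halfAngle_le_of_taylor_le (q := 0.3045) one_pos hr₀ hr₀
      (by norm_num) (by linarith) (by norm_num)
  have hangle : halfAngle r 1 r ≤ 0.6379 :=
    halfAngle_le_of_shift_taylor_le (y := -0.1487) hr₀ one_pos hr₀
      (by norm_num) (by norm_num) (by linarith) (by norm_num)
  exact triadDensity_le (ρ := 0.3043) one_pos hr₀ hr₀ h₁ (halfAngle_comm r 1 r ▸ hangle) hangle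
    (by linarith) (by norm_num) (by linarith)

theorem triadDensity_one_right_left_le : triadDensity 1 r s ≤ 0.947 := by
  obtain ⟨hs, hs'⟩ := h.mem_Icc
  obtain ⟨hr, hr'⟩ := h.mem_Icc_right
  obtain ⟨-, hss⟩ := h.sq_mem_Icc
  obtain ⟨hrr, hrr'⟩ := h.sq_right_mem_Icc
  obtain ⟨hrs, hrs'⟩ := h.mul_mem_Icc
  have hs₀ := h.pos
  have hr₀ := h.pos_right
  have h₁ : halfAngle 1 r s ≤ 0.1972 :=
    halfAngle_le_of_taylor_le (q := 0.1997) one_pos hr₀ hs₀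
      (by norm_num) (by linarith) (by norm_num)
  have hangle : halfAngle r s 1 ≤ 0.4545 :=
    halfAngle_le_of_taylor_le (q := 0.48575) hr₀ hs₀ one_pos
      (by norm_num) (by linarith) (by norm_num)
  exact triadDensity_le (ρ := 0.1995) one_pos hr₀ hs₀ h₁ hangle h.halfAngle_mem_Icc.2.1.2
    (by linarith) (by norm_num) (by linarith)

theorem triadDensity_right_right_left_le : triadDensity r r s ≤ 0.947 := by
  obtain ⟨hs, hs'⟩ := h.mem_Icc
  obtain ⟨hr, hr'⟩ := h.mem_Icc_right
  obtain ⟨-, hss⟩ := h.sq_mem_Icc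
  obtain ⟨hrr, hrr'⟩ := h.sq_right_mem_Icc
  obtain ⟨-, hrs⟩ := h.mul_mem_Icc
  have hs₀ := h.pos
  have hr₀ := h.pos_right
  have hangle : halfAngle r r s ≤ 0.3765 :=
    halfAngle_le_of_taylor_le (q := 0.3946) hr₀ hr₀ hs₀
      (by norm_num) (by nlinarith) (by norm_num)
  exact triadDensity_le (ρ := 0.162) hr₀ hr₀ hs₀ hangle (halfAngle_comm r r s ▸ hangle)
    h.halfAngle_mem_Icc.2.2.2.1.2 (by nlinarith) (by norm_num) (by linarith)

theorem triadDensity_right_left_left_le : triadDensity r s s ≤ 0.947 := by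
  obtain ⟨hs, hs'⟩ := h.mem_Icc
  obtain ⟨hr, hr'⟩ := h.mem_Icc_right
  obtain ⟨hss, hss'⟩ := h.sq_mem_Icc
  obtain ⟨hrr, hrr'⟩ := h.sq_right_mem_Icc
  obtain ⟨hrs, -⟩ := h.mul_mem_Icc
  have hs₀ := h.pos
  have hr₀ := h.pos_right
  obtain ⟨-, -, -, -, ⟨-, hangle⟩, -⟩ := h.halfAngle_mem_Icc
  have h₁ : halfAngle r s s ≤ 0.2729 :=
    halfAngle_le_of_taylor_le (q := 0.2797) hr₀ hs₀ hs₀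
      (by norm_num) (by nlinarith) (by norm_num)
  exact triadDensity_le (ρ := 0.1148) hr₀ hs₀ hs₀ h₁ (halfAngle_comm s r s ▸ hangle) hangle
    (by nlinarith) (by norm_num) (by linarith)

theorem coveredArea_le {P T : Set Disk} (hP : IsCompactPacking P) (hr : RadiiIn P {1, r, s})
    (hT : IsFace P T) : coveredArea T ≤ 0.947 * hullArea T := by
  obtain ⟨d, e, f, hde, hdf, hef, rfl, hed, hfe⟩ := hT.isTriad.exists_radius_le
  have hlt := h.lt
  have hlt₁ := h.lt_one
  have hd : d.radius = 1 ∨ d.radius = r ∨ d.radius = s := hr d (hT.subset (by simp))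
  have he : e.radius = 1 ∨ e.radius = r ∨ e.radius = s := hr e (hT.subset (by simp))
  have hf : f.radius = 1 ∨ f.radius = r ∨ f.radius = s := hr f (hT.subset (by simp))
  rw [coveredArea_eq_mul_hullArea hde hdf hef]
  refine mul_le_mul_of_nonneg_right ?_ (hullArea_nonneg _)
  have hmiddle (hd : d.radius = 1) (hf : f.radius = s) : e.radius = r := by
    have hperm : ({d, e, f} : Set Disk) = {f, d, e} := by grind
    exact h.radius_eq_of_isFace hP hr hdf.symm hef.symm hde (hperm ▸ hT) hf hd
  rcases hd with hd | hd | hd <;> rcases he with he | he | he <;> rcases hf with hf | hf | hf <;>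
    rw [hd, he, hf]
  all_goals first
    | exact triadDensity_self_le one_pos
    | exact triadDensity_self_le h.pos
    | exact triadDensity_self_le h.pos_right
    | exact h.triadDensity_one_one_right_le
    | exact h.triadDensity_one_right_right_le
    | exact h.triadDensity_one_right_left_le
    | exact h.triadDensity_right_right_left_le
    | exact h.triadDensity_right_left_left_le
    | grind only

theorem density_le {P : Set Disk} (hP : IsCompactPacking P) (hr : RadiiIn P {1, r, s}) :
    density P ≤ 0.947 :=
  hP.density_le (h.isUniformPacking hP.1 hr) zero_le_one (by norm_num) fun _ hT =>
    h.coveredArea_le hP hr hT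

end IsSpecialRadii

/-! ### Tight triads -/

section Tight

variable {σ M a b c A B C D E F : ℝ} {P T : Set Disk} {d e f g : Disk}

/-- The radii `a`, `b`, `c` are tight for `σ` if the following inequality holds; it prevents a disk
of radius at least `σ` not overlapping the disks of a triad of radii `a`, `b`, `c` from meeting the
triangle of their centers. It compares, at the point of barycentric coordinates `α`, `β`, `γ`, the
mean square distance to the centers with the one required by the absence of overlaps. -/
def IsTight (σ a b c : ℝ) : Prop :=
  ∀ ⦃α β γ : ℝ⦄, 0 ≤ α → 0 ≤ β → 0 ≤ γ → α + β + γ = 1 →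
    α * β * (a + b) ^ 2 + β * γ * (b + c) ^ 2 + α * γ * (a + c) ^ 2 <
      α * (a ^ 2 + 2 * σ * a) + β * (b ^ 2 + 2 * σ * b) + γ * (c ^ 2 + 2 * σ * c)

theorem isTight_of_le (hA : A ≤ a ^ 2 + 2 * σ * a) (hB : B ≤ b ^ 2 + 2 * σ * b)
    (hC : C ≤ c ^ 2 + 2 * σ * c) (hD : D ≤ 2 * σ * (a + b) - 2 * (a * b))
    (hE : E ≤ 2 * σ * (b + c) - 2 * (b * c)) (hF : F ≤ 2 * σ * (a + c) - 2 * (a * c))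
    (hpos : ∀ α β γ : ℝ, 0 ≤ α → 0 ≤ β → 0 ≤ γ → α + β + γ = 1 →
      0 < A * α ^ 2 + B * β ^ 2 + C * γ ^ 2 + D * (α * β) + E * (β * γ) + F * (α * γ)) :
    IsTight σ a b c := fun α β γ hα hβ hγ hsum => by
  have hform : A * α ^ 2 + B * β ^ 2 + C * γ ^ 2 + D * (α * β) + E * (β * γ) + F * (α * γ) ≤
      (a ^ 2 + 2 * σ * a) * α ^ 2 + (b ^ 2 + 2 * σ * b) * β ^ 2 + (c ^ 2 + 2 * σ * c) * γ ^ 2 +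
        (2 * σ * (a + b) - 2 * (a * b)) * (α * β) + (2 * σ * (b + c) - 2 * (b * c)) * (β * γ) +
        (2 * σ * (a + c) - 2 * (a * c)) * (α * γ) := by
    gcongr
  obtain rfl : γ = 1 - α - β := by linarith
  linarith [hpos α β _ hα hβ hγ hsum]

theorem sum_mul_norm_sq_eq {V : Type*} [NormedAddCommGroup V] [InnerProductSpace ℝ V] (u v w : V)
    {α β γ : ℝ} (h : α + β + γ = 1) :
    α * ‖u‖ ^ 2 + β * ‖v‖ ^ 2 + γ * ‖w‖ ^ 2 = ‖α • u + β • v + γ • w‖ ^ 2 +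
      (α * β * ‖u - v‖ ^ 2 + β * γ * ‖v - w‖ ^ 2 + α * γ * ‖u - w‖ ^ 2) := by
  obtain rfl : γ = 1 - α - β := by linarith
  simp only [norm_sub_sq_real, norm_add_sq_real, inner_add_left, inner_smul_left, inner_smul_right,
    norm_smul, mul_pow, Real.norm_eq_abs, sq_abs, conj_trivial]
  ring

/-- A triad whose radii are tight for `σ`. -/
def IsTightTriad (σ : ℝ) (T : Set Disk) : Prop :=
  ∃ d e f : Disk, d.Tangent e ∧ d.Tangent f ∧ e.Tangent f ∧
    IsTight σ d.radius e.radius f.radius ∧ T = {d, e, f}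

theorem IsTightTriad.isTriad (hT : IsTightTriad σ T) : IsTriad T := by
  obtain ⟨d, e, f, hde, hdf, hef, -, rfl⟩ := hT
  exact isTriad_of_tangent hde hdf hef

theorem IsTightTriad.disjoint_hull (hT : IsTightTriad σ T) (hσ : σ ≤ g.radius)
    (hg : ∀ d ∈ T, g.radius + d.radius ≤ dist g.center d.center) : Disjoint (hull T) g.set := by
  obtain ⟨d, e, f, hde, hdf, hef, htight, rfl⟩ := hT
  refine disjoint_left.2 fun x hx hxg => ?_
  obtain ⟨α, β, γ, hα, hβ, hγ, hsum, rfl⟩ := mem_hull_triple.1 hx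
  have hsep (x : Disk) (hx : x ∈ ({d, e, f} : Set Disk)) :
      (g.radius + x.radius) ^ 2 ≤ ‖x.center - g.center‖ ^ 2 := by
    have := g.radius_pos
    have := x.radius_pos
    rw [← dist_eq_norm, dist_comm]
    gcongr
    exact hg x hx
  have hcombo : α • (d.center - g.center) + β • (e.center - g.center) + γ • (f.center - g.center) =
      α • d.center + β • e.center + γ • f.center - g.center := by
    obtain rfl : γ = 1 - α - β := by linarith
    module
  have hmean := sum_mul_norm_sq_eq (d.center - g.center) (e.center - g.center)
    (f.center - g.center) hsum
  rw [sub_sub_sub_cancel_right, sub_sub_sub_cancel_right, sub_sub_sub_cancel_right, hcombo,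
    hde.symm.norm_sub, hef.symm.norm_sub, hdf.symm.norm_sub] at hmean
  have hx : ‖α • d.center + β • e.center + γ • f.center - g.center‖ ^ 2 ≤ g.radius ^ 2 := by
    rw [← dist_eq_norm]
    gcongr
    exact Disk.mem_set.1 hxg
  have hα' := mul_le_mul_of_nonneg_left (hsep d (by simp)) hα
  have hβ' := mul_le_mul_of_nonneg_left (hsep e (by simp)) hβ
  have hγ' := mul_le_mul_of_nonneg_left (hsep f (by simp)) hγ
  have hmass : 0 ≤ α * d.radius + β * e.radius + γ * f.radius := by
    have := d.radius_pos
    have := e.radius_pos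
    have := f.radius_pos
    positivity
  have := htight hα hβ hγ hsum
  obtain rfl : γ = 1 - α - β := by linarith
  nlinarith [mul_le_mul_of_nonneg_right hσ hmass]

/-- The triangles of the tight triads of `P` cover the plane. -/
def HasTightCover (σ : ℝ) (P : Set Disk) : Prop := ∀ x, ∃ T ⊆ P, IsTightTriad σ T ∧ x ∈ hull T

theorem HasTightCover.saturated {S : Set ℝ} (hP : HasTightCover σ P) (hS : ∀ a ∈ S, σ ≤ a) :
    Saturated P S := by
  rintro ⟨g, hg, hdisj⟩
  obtain ⟨T, hTP, hT, hx⟩ := hP g.center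
  refine disjoint_left.1 (hT.disjoint_hull (hS _ hg) fun d hd => ?_) hx g.center_mem
  exact Disk.disjoint_interior_iff.1 ((hdisj d (hTP hd)).mono_right interior_subset)

namespace IsUniformPacking

variable (hP : IsUniformPacking P σ M)
include hP

theorem disjoint_hull_of_notMem (hT : IsTightTriad σ T) (hTP : T ⊆ P) (hd : d ∈ P) (hdT : d ∉ T) :
    Disjoint (hull T) d.set :=
  hT.disjoint_hull (hP.radius_mem d hd).1 fun _ he =>
    hP.isPacking.radius_add_radius_le_dist hd (hTP he) (ne_of_mem_of_not_mem he hdT).symm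

theorem hole_subset_of_isTightTriad (hT : IsTightTriad σ T) (hTP : T ⊆ P) :
    hole T ⊆ (packingUnion P)ᶜ := fun x hx hxP => by
  obtain ⟨d, hd, hxd⟩ := mem_packingUnion.1 hxP
  by_cases hdT : d ∈ T
  · exact hx.2 (mem_packingUnion.2 ⟨d, hdT, hxd⟩)
  · exact disjoint_left.1 (hP.disjoint_hull_of_notMem hT hTP hd hdT) hx.1 hxd

theorem isCompactPacking_of_hasTightCover (hcover : HasTightCover σ P) : IsCompactPacking P := by
  refine ⟨hP.isPacking, fun x hx => ?_⟩
  obtain ⟨T, hTP, hT, hxT⟩ := hcover x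
  have hxhole : x ∈ hole T := ⟨hxT, fun hxT' => hx (packingUnion_mono hTP hxT')⟩
  set U := connectedComponentIn (packingUnion P)ᶜ x
  have hhole : hole T ⊆ U := hT.isTriad.isPreconnected_hole.subset_connectedComponentIn hxhole
    (hP.hole_subset_of_isTightTriad hT hTP)
  have hhull : U ⊆ hull T := by
    refine subset_of_isPreconnected_of_disjoint_frontier isPreconnected_connectedComponentIn
      ⟨x, mem_connectedComponentIn hx, hxT⟩ (disjoint_left.2 fun y hy hyT => ?_)
    exact connectedComponentIn_subset _ _ hy
      (packingUnion_mono hTP (hT.isTriad.frontier_hull_subset_packingUnion hyT))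
  have hclosure : {d ∈ P | (closure U ∩ d.set).Nonempty} = T := by
    ext d
    refine ⟨fun ⟨hd, y, hyU, hyd⟩ => ?_, fun hd => ⟨hTP hd, ?_⟩⟩
    · by_contra hdT
      exact disjoint_left.1 (hP.disjoint_hull_of_notMem hT hTP hd hdT)
        (closure_minimal hhull hT.isTriad.isClosed_hull hyU) hyd
    · exact (hT.isTriad.closure_hole_inter hd).mono (inter_subset_inter_left _ (closure_mono hhole))
  refine ⟨hT.isTriad.isCompact_hull.isBounded.subset hhull, ?_⟩
  rw [hclosure]
  obtain ⟨d, e, f, hde, hdf, hef, -, rfl⟩ := hT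
  exact ⟨d, e, f, hTP (by simp), hTP (by simp), hTP (by simp), hde.ne, hdf.ne, hef.ne, hde, hdf,
    hef, rfl⟩

end IsUniformPacking

namespace IsSpecialRadii

variable {r s : ℝ} (h : IsSpecialRadii r s)
include h

theorem isTight_one_one_right : IsTight s 1 1 r := by
  obtain ⟨hs, -⟩ := h.mem_Icc
  obtain ⟨-, hr⟩ := h.mem_Icc_right
  obtain ⟨hrr, -⟩ := h.sq_right_mem_Icc
  obtain ⟨hrs, -⟩ := h.mul_mem_Icc
  refine isTight_of_le (A := 1.3) (B := 1.3) (C := 0.29) (D := -1.4) (E := -0.4) (F := -0.4)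
    (by linarith) (by linarith) (by linarith) (by linarith) (by linarith) (by linarith) ?_
  intro α β γ hα hβ hγ hsum
  nlinarith [sq_nonneg (α - β), sq_nonneg (α - 0.4 * γ), sq_nonneg (β - 0.4 * γ)]

theorem isTight_one_right_left : IsTight s 1 r s := by
  obtain ⟨hs, -⟩ := h.mem_Icc
  obtain ⟨-, hr⟩ := h.mem_Icc_right
  obtain ⟨hss, -⟩ := h.sq_mem_Icc
  obtain ⟨hrr, -⟩ := h.sq_right_mem_Icc
  obtain ⟨hrs, -⟩ := h.mul_mem_Icc
  refine isTight_of_le (A := 1.3) (B := 0.29) (C := 0.06) (D := -0.4) (E := 0) (F := 0)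
    (by linarith) (by linarith) (by linarith) (by linarith) (by linarith) (by linarith) ?_
  intro α β γ hα hβ hγ hsum
  nlinarith [sq_nonneg (α - β), sq_nonneg (β - γ), sq_nonneg (α - γ)]

theorem isTight_left_right_left : IsTight s s r s := by
  obtain ⟨hss, -⟩ := h.sq_mem_Icc
  obtain ⟨hrr, -⟩ := h.sq_right_mem_Icc
  obtain ⟨hrs, -⟩ := h.mul_mem_Icc
  refine isTight_of_le (A := 0.06) (B := 0.06) (C := 0.06) (D := 0) (E := 0) (F := 0)
    (by linarith) (by linarith) (by linarith) (by linarith) (by linarith) (by linarith) ?_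
  intro α β γ hα hβ hγ hsum
  nlinarith [sq_nonneg (α - β), sq_nonneg (β - γ), sq_nonneg (α - γ)]

end IsSpecialRadii

end Tight

/-! ### Lattice packings -/

section Lattice

open scoped Pointwise

variable {ι : Type*} [Finite ι] {P B : Set Disk} {L : Submodule ℤ Plane} {d e : Disk}
  {v : Plane} {K R c : ℝ}

theorem exists_volume_mul_le_of_pairwise_disjoint_vadd (b : Basis ι ℝ Plane) {E : Set Plane}
    (hE : MeasurableSet E) (hEb : Bornology.IsBounded E)
    (hdisj : Pairwise fun v w : Submodule.span ℤ (range b) =>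
      Disjoint ((v : Plane) +ᵥ E) ((w : Plane) +ᵥ E)) :
    ∃ c, 0 ≤ c ∧ ∀ R, volume E * volume (square R) ≤ volume (ZSpan.fundamentalDomain b) *
      volume ((⋃ v : Submodule.span ℤ (range b), (v : Plane) +ᵥ E) ∩ square (R + c)) := by
  have := Fintype.ofFinite ι
  have hbdd := (ZSpan.fundamentalDomain_isBounded b).union hEb
  refine ⟨_, diam_nonneg (s := ZSpan.fundamentalDomain b ∪ E), fun R => ?_⟩
  let V := {v : Submodule.span ℤ (range b) |
    (((v : Plane) +ᵥ ZSpan.fundamentalDomain b) ∩ square R).Nonempty}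
  have hcover : square R ⊆ ⋃ v ∈ V, ((v : Plane) +ᵥ ZSpan.fundamentalDomain b) := fun x hx => by
    have hmem : x ∈ ((ZSpan.floor b x : Submodule.span ℤ (range b)) : Plane) +ᵥ
        ZSpan.fundamentalDomain b :=
      ⟨ZSpan.fract b x, ZSpan.fract_mem_fundamentalDomain b x, by simp [ZSpan.fract_apply]⟩
    exact mem_iUnion₂.2 ⟨ZSpan.floor b x, ⟨x, hmem, hx⟩, hmem⟩
  have hnear : (⋃ v ∈ V, (v : Plane) +ᵥ E) ⊆
      (⋃ v : Submodule.span ℤ (range b), (v : Plane) +ᵥ E) ∩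
        square (R + diam (ZSpan.fundamentalDomain b ∪ E)) := by
    refine iUnion₂_subset fun v hv y hy => ⟨mem_iUnion.2 ⟨v, hy⟩, ?_⟩
    obtain ⟨_, ⟨x, hx, rfl⟩, hxR⟩ := hv
    obtain ⟨y, hyE, rfl⟩ := hy
    refine mem_square_add_of_dist_le hxR ?_
    simpa only [vadd_eq_add, dist_add_left] using
      dist_le_diam_of_mem hbdd (mem_union_right _ hyE) (mem_union_left _ hx)
  calc volume E * volume (square R)
      ≤ volume E * ∑' _ : V, volume (ZSpan.fundamentalDomain b) := by
        gcongr
        refine (measure_mono hcover).trans ((measure_biUnion_le _ V.to_countable _).trans_eq ?_)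
        simp only [measure_vadd]
    _ = volume (ZSpan.fundamentalDomain b) * ∑' _ : V, volume E := by
        simp only [ENNReal.tsum_const]
        ring
    _ = volume (ZSpan.fundamentalDomain b) * volume (⋃ v ∈ V, (v : Plane) +ᵥ E) := by
        rw [measure_biUnion V.to_countable (hdisj.set_pairwise V)
          fun v _ => hE.const_vadd (v : Plane)]
        simp only [measure_vadd]
    _ ≤ _ := by gcongr

/-- The disk `d` translated by the vector `v`. -/
def Disk.translate (d : Disk) (v : Plane) : Disk := ⟨d.center + v, d.radius, d.radius_pos⟩

/-- The periodic family of all translates of the disks of `B` by the vectors of the lattice `L`. -/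
def latticeTranslates (L : Submodule ℤ Plane) (B : Set Disk) : Set Disk :=
  {d | ∃ e ∈ B, ∃ v ∈ L, d = e.translate v}

/-- The disk `d` overlaps no translate of the disk `e` by a vector of the lattice `L`. -/
def Disk.IsApart (L : Submodule ℤ Plane) (d e : Disk) : Prop :=
  ∀ v ∈ L, d.radius + e.radius ≤ dist d.center (e.center + v)

/-- The translates of the disks of `B` by the vectors of `L` form a packing. By periodicity, it
suffices to translate one of two disks. -/
structure IsLatticeSeparated (L : Submodule ℤ Plane) (B : Set Disk) : Prop where
  isApart : B.Pairwise (Disk.IsApart L)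
  two_mul_radius_le : ∀ d ∈ B, ∀ v ∈ L, v ≠ 0 → 2 * d.radius ≤ ‖v‖

theorem Disk.IsApart.symm (h : d.IsApart L e) : e.IsApart L d := fun v hv => by
  rw [add_comm, dist_comm, ← dist_add_right _ _ (-v), add_neg_cancel_right]
  exact h _ (L.neg_mem hv)

instance : Std.Symm (Disk.IsApart L) := ⟨fun _ _ => Disk.IsApart.symm⟩

theorem IsLatticeSeparated.radius_add_radius_le_dist (h : IsLatticeSeparated L B) (hd : d ∈ B)
    (he : e ∈ B) (hv : v ∈ L) (hdv : d = e → v ≠ 0) :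
    d.radius + e.radius ≤ dist d.center (e.center + v) := by
  rcases eq_or_ne d e with rfl | hde
  · rw [dist_self_add_right, ← two_mul]
    exact h.two_mul_radius_le d hd v hv (hdv rfl)
  · exact h.isApart hd he hde v hv

theorem Disk.translate_zero : d.translate 0 = d := by
  simp [Disk.translate]

theorem dist_translate_center {w : Plane} :
    dist (d.translate v).center (e.translate w).center = dist d.center (e.center + (w - v)) := by
  rw [← dist_add_right d.center _ v, add_assoc, sub_add_cancel, Disk.translate, Disk.translate]

theorem subset_latticeTranslates : B ⊆ latticeTranslates L B := fun d hd =>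
  ⟨d, hd, 0, L.zero_mem, Disk.translate_zero.symm⟩

theorem translate_mem_latticeTranslates (hd : d ∈ B) (hv : v ∈ L) :
    d.translate v ∈ latticeTranslates L B :=
  ⟨d, hd, v, hv, rfl⟩

theorem IsLatticeSeparated.isPacking (h : IsLatticeSeparated L B) :
    IsPacking (latticeTranslates L B) := by
  refine isPacking_iff.2 ?_
  rintro _ ⟨d, hd, v, hv, rfl⟩ _ ⟨e, he, w, hw, rfl⟩ hne
  rw [dist_translate_center]
  refine (h.radius_add_radius_le_dist hd he (L.sub_mem hw hv) ?_ :)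
  rintro rfl hvw
  rw [sub_eq_zero.1 hvw] at hne
  exact hne rfl

theorem RadiiIn.latticeTranslates {S : Set ℝ} (h : RadiiIn B S) :
    RadiiIn (latticeTranslates L B) S := by
  rintro _ ⟨d, hd, v, -, rfl⟩
  exact h d hd

theorem Disk.volume_interior :
    volume (interior d.set) = ENNReal.ofReal (Real.pi * d.radius ^ 2) := by
  rw [d.interior_eq, EuclideanSpace.volume_ball_fin_two, ← ENNReal.ofReal_pow d.radius_pos.le,
    ← ENNReal.ofReal_mul (by positivity), mul_comm]

theorem Disk.vadd_interior : v +ᵥ interior d.set = interior (d.translate v).set := by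
  rw [Disk.interior_eq, Disk.interior_eq, vadd_ball, vadd_eq_add, add_comm]
  rfl

theorem IsLatticeSeparated.disjoint_vadd (h : IsLatticeSeparated L B) {v w : L} (hvw : v ≠ w) :
    Disjoint ((v : Plane) +ᵥ ⋃ d ∈ B, interior d.set) ((w : Plane) +ᵥ ⋃ d ∈ B, interior d.set) := by
  simp only [vadd_set_iUnion₂, Disk.vadd_interior, disjoint_iUnion_left, disjoint_iUnion_right]
  intro e he d hd
  rw [Disk.disjoint_interior_iff, dist_translate_center]
  exact (h.radius_add_radius_le_dist hd he (L.sub_mem w.2 v.2) fun _ =>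
    sub_ne_zero.2 (Subtype.coe_ne_coe.2 hvw.symm) :)

theorem IsLatticeSeparated.volume_iUnion_interior (h : IsLatticeSeparated L B) (hB : B.Finite) :
    volume (⋃ d ∈ B, interior d.set) =
      ENNReal.ofReal (Real.pi * ∑ d ∈ hB.toFinset, d.radius ^ 2) := by
  rw [Finset.mul_sum, ENNReal.ofReal_sum_of_nonneg fun d _ => by positivity]
  calc volume (⋃ d ∈ B, interior d.set) = volume (⋃ d ∈ hB.toFinset, interior d.set) := by simp
    _ = ∑ d ∈ hB.toFinset, volume (interior d.set) :=
      measure_biUnion_finset (fun d hd e he hde => h.isPacking d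
        (subset_latticeTranslates (hB.mem_toFinset.1 hd)) e
        (subset_latticeTranslates (hB.mem_toFinset.1 he)) hde)
        fun d _ => isOpen_interior.measurableSet
    _ = _ := Finset.sum_congr rfl fun d _ => d.volume_interior

theorem le_density_of_forall (h : ∀ R, 0 ≤ R → K * (4 * R ^ 2) ≤
    (volume (packingUnion P ∩ square (R + c))).toReal) : K ≤ density P := by
  have hle : ∀ R : ℝ, 0 < R → (volume (packingUnion P ∩ square R)).toReal / (4 * R ^ 2) ≤ 1 :=
    fun R hR => div_le_one_of_le₀ (ENNReal.toReal_le_of_le_ofReal (by positivity)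
      ((measure_mono inter_subset_right).trans_eq (volume_square hR.le))) (by positivity)
  have hlim : Filter.Tendsto (fun R : ℝ => K * (1 - c * R⁻¹) ^ 2) Filter.atTop (𝓝 K) := by
    simpa using (((tendsto_inv_atTop_zero.const_mul c).const_sub 1).pow 2).const_mul K
  rw [← hlim.limsup_eq]
  refine Filter.limsup_le_limsup ?_ hlim.isCoboundedUnder_le
    (Filter.isBoundedUnder_of_eventually_le ((Filter.eventually_gt_atTop 0).mono hle))
  filter_upwards [Filter.eventually_gt_atTop 0, Filter.eventually_ge_atTop c] with R hR hcR
  rw [le_div_iff₀ (by positivity)]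
  calc K * (1 - c * R⁻¹) ^ 2 * (4 * R ^ 2) = K * (4 * (R - c) ^ 2) := by field_simp
    _ ≤ _ := by simpa using h (R - c) (sub_nonneg.2 hcR)

theorem IsLatticeSeparated.le_density (b : Basis ι ℝ Plane) (hB : B.Finite)
    (h : IsLatticeSeparated (Submodule.span ℤ (range b)) B) :
    Real.pi * (∑ᶠ d ∈ B, d.radius ^ 2) / volume.real (ZSpan.fundamentalDomain b) ≤
      density (latticeTranslates (Submodule.span ℤ (range b)) B) := by
  rw [finsum_mem_eq_finite_toFinset_sum _ hB]
  have := Fintype.ofFinite ι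
  obtain ⟨c, hc, hvol⟩ := exists_volume_mul_le_of_pairwise_disjoint_vadd b
    (E := ⋃ d ∈ B, interior d.set)
    (MeasurableSet.biUnion hB.countable fun d _ => isOpen_interior.measurableSet)
    ((Bornology.isBounded_biUnion hB).2 fun d _ => isBounded_closedBall.subset interior_subset)
    fun v w => h.disjoint_vadd
  have hcell : 0 < volume.real (ZSpan.fundamentalDomain b) :=
    ENNReal.toReal_pos (ZSpan.measure_fundamentalDomain_ne_zero b)
      (ZSpan.fundamentalDomain_isBounded b).measure_lt_top.ne
  refine le_density_of_forall (c := c) fun R hR => ?_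
  rw [div_mul_eq_mul_div, div_le_iff₀' hcell, measureReal_def, ← ENNReal.toReal_mul]
  have hfin : volume (ZSpan.fundamentalDomain b) * volume (packingUnion
      (latticeTranslates (Submodule.span ℤ (range b)) B) ∩ square (R + c)) ≠ ⊤ :=
    ENNReal.mul_ne_top (ZSpan.fundamentalDomain_isBounded b).measure_lt_top.ne
      (measure_ne_top_of_subset inter_subset_right
        (volume_square (add_nonneg hR hc) ▸ ENNReal.ofReal_ne_top))
  refine (ENNReal.ofReal_le_iff_le_toReal hfin).1 ?_
  rw [ENNReal.ofReal_mul (by positivity), ← h.volume_iUnion_interior, ← volume_square hR]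
  refine (hvol R).trans ?_
  gcongr
  simp only [vadd_set_iUnion₂, Disk.vadd_interior]
  refine iUnion_subset fun v => iUnion₂_subset fun d hd x hx => ?_
  exact mem_packingUnion.2 ⟨_, translate_mem_latticeTranslates hd v.2, interior_subset hx⟩

end Lattice

/-! ### The rhombic lattice -/

section Rhombic

variable {h x y R : ℝ} {p v : Plane} {d e : Disk} {B : Set Disk}

/-- The basis of the plane whose lattice is `rhombicLattice h`. -/
noncomputable def rhombicBasis (h : ℝ) (hh : h ≠ 0) : Basis (Fin 2) ℝ Plane :=
  basisOfLinearIndependentOfCardEqFinrank (b := ![!₂[2, 0], !₂[1, h]])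
    (LinearIndependent.pair_iff.2 fun a b hab => by
      have h₀ := congrArg (· 0) hab
      have h₁ := congrArg (· 1) hab
      have hb : b = 0 := by simpa [hh] using h₁
      exact ⟨by simpa [hb] using h₀, hb⟩) (by simp)

/-- The rhombic lattice generated by `(2, 0)` and `(1, h)`: unit disks centered at its points form
rows at mutual distance `h` in which neighbours are tangent. -/
noncomputable def rhombicLattice (h : ℝ) : Submodule ℤ Plane :=
  Submodule.span ℤ {!₂[2, 0], !₂[1, h]}

theorem span_range_rhombicBasis (hh : h ≠ 0) :
    Submodule.span ℤ (range (rhombicBasis h hh)) = rhombicLattice h := by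
  simp [rhombicBasis, rhombicLattice, Set.pair_comm]

theorem volume_real_fundamentalDomain_rhombicBasis (hh : 0 < h) :
    volume.real (ZSpan.fundamentalDomain (rhombicBasis h hh.ne')) = 2 * h := by
  let b₀ := EuclideanSpace.basisFun (Fin 2) ℝ
  have hdet : b₀.toBasis.det (rhombicBasis h hh.ne') = 2 * h := by
    simp [Basis.det_apply, Matrix.det_fin_two, Basis.toMatrix_apply, rhombicBasis, b₀]
  rw [ZSpan.measureReal_fundamentalDomain _ _ b₀.toBasis, hdet, measureReal_def,
    measure_congr (ZSpan.fundamentalDomain_ae_parallelepiped _ volume), b₀.coe_toBasis,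
    b₀.volume_parallelepiped, abs_of_pos (by positivity), ENNReal.toReal_one, mul_one]

theorem mem_rhombicLattice : v ∈ rhombicLattice h ↔ ∃ m n : ℤ, v = !₂[(2 * m + n : ℝ), n * h] := by
  rw [rhombicLattice, Submodule.mem_span_pair]
  refine exists₂_congr fun m n => ?_
  rw [eq_comm, PiLp.ext_iff, PiLp.ext_iff]
  simp [Fin.forall_fin_two, mul_comm]

theorem sq_abs_sub_abs_le_sq_add (a b : ℝ) : (|b| - |a|) ^ 2 ≤ (a + b) ^ 2 := by
  rw [sq_le_sq]
  simpa [add_comm] using abs_abs_sub_abs_le b (-a)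

theorem sq_le_sq_sub_add_sq_sub (hx : x ∈ Icc 0 2) (hy : y ∈ Icc 0 h)
    (h₀₀ : R ^ 2 ≤ x ^ 2 + y ^ 2) (h₂₀ : R ^ 2 ≤ (2 - x) ^ 2 + y ^ 2)
    (h₁₁ : R ^ 2 ≤ (1 - x) ^ 2 + (h - y) ^ 2) {m n : ℕ} (hmn : Even m ↔ Even n) :
    R ^ 2 ≤ (m - x) ^ 2 + (n * h - y) ^ 2 := by
  obtain ⟨hx₀, hx₂⟩ := hx
  obtain ⟨hy₀, hyh⟩ := hy
  by_cases hn : Even n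
  · have hyn : y ^ 2 ≤ (n * h - y) ^ 2 := by
      rcases n.eq_zero_or_pos with rfl | hpos
      · simp
      · have : (2 : ℝ) ≤ n := by exact_mod_cast Nat.le_of_dvd hpos hn.two_dvd
        gcongr
        nlinarith
    rcases m.eq_zero_or_pos with rfl | hpos
    · simpa using h₀₀.trans (add_le_add_right hyn _)
    · have : (2 : ℝ) ≤ m := by exact_mod_cast Nat.le_of_dvd hpos (hmn.2 hn).two_dvd
      exact h₂₀.trans (add_le_add (pow_le_pow_left₀ (by linarith) (by linarith) 2) hyn)
  · have hm := Nat.not_even_iff_odd.1 (mt hmn.1 hn)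
    have hn : (1 : ℝ) ≤ n := by exact_mod_cast (Nat.not_even_iff_odd.1 hn).pos
    refine h₁₁.trans (add_le_add ?_ (pow_le_pow_left₀ (by linarith) (by nlinarith) 2))
    obtain ⟨j, rfl⟩ := hm
    rcases j.eq_zero_or_pos with rfl | hj
    · simp
    · have : (1 : ℝ) ≤ j := by exact_mod_cast hj
      rw [sq_le_sq, Nat.cast_add, Nat.cast_mul, Nat.cast_two, Nat.cast_one]
      exact (abs_le.2 ⟨by linarith, by linarith⟩ : |1 - x| ≤ 1).trans
        (le_abs_self _ |>.trans' (by linarith))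

theorem le_norm_add_of_mem_rhombicLattice (hx : |p 0| = x) (hy : |p 1| = y) (hx₂ : x ≤ 2)
    (hyh : y ≤ h) (h₀₀ : R ^ 2 ≤ x ^ 2 + y ^ 2) (h₂₀ : R ^ 2 ≤ (2 - x) ^ 2 + y ^ 2)
    (h₁₁ : R ^ 2 ≤ (1 - x) ^ 2 + (h - y) ^ 2) (hv : v ∈ rhombicLattice h) : R ≤ ‖p + v‖ := by
  obtain ⟨m, n, rfl⟩ := mem_rhombicLattice.1 hv
  have hh : |h| = h := abs_of_nonneg (by linarith [abs_nonneg (p 1)])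
  refine le_of_sq_le_sq ?_ (norm_nonneg _)
  have hpar : Even (2 * m + n).natAbs ↔ Even n.natAbs := by
    simp [Int.natAbs_even, Int.even_add]
  calc R ^ 2 ≤ ((2 * m + n).natAbs - x) ^ 2 + (n.natAbs * h - y) ^ 2 :=
        sq_le_sq_sub_add_sq_sub ⟨hx ▸ abs_nonneg _, hx₂⟩ ⟨hy ▸ abs_nonneg _, hyh⟩ h₀₀ h₂₀ h₁₁ hpar
    _ = (|(2 * m + n : ℝ)| - |p 0|) ^ 2 + (|n * h| - |p 1|) ^ 2 := by
        rw [hx, hy, abs_mul, hh, Nat.cast_natAbs, Nat.cast_natAbs]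
        push_cast
        rfl
    _ ≤ (p 0 + (2 * m + n)) ^ 2 + (p 1 + n * h) ^ 2 :=
        add_le_add (sq_abs_sub_abs_le_sq_add _ _) (sq_abs_sub_abs_le_sq_add _ _)
    _ = _ := by simp [EuclideanSpace.real_norm_sq_eq]

theorem two_le_norm_of_mem_rhombicLattice (hh : 3 ≤ h ^ 2) (hv : v ∈ rhombicLattice h)
    (hv₀ : v ≠ 0) : 2 ≤ ‖v‖ := by
  obtain ⟨m, n, rfl⟩ := mem_rhombicLattice.1 hv
  have hmn : 1 ≤ m ^ 2 + m * n + n ^ 2 := by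
    by_contra! hlt
    obtain rfl : n = 0 := by nlinarith [sq_nonneg (2 * m + n), mul_self_nonneg n]
    obtain rfl : m = 0 := by nlinarith [mul_self_nonneg m]
    simp at hv₀
  have hmn' : (1 : ℝ) ≤ m ^ 2 + m * n + n ^ 2 := by exact_mod_cast hmn
  refine le_of_sq_le_sq ?_ (norm_nonneg _)
  calc (2 : ℝ) ^ 2 ≤ (2 * m + n) ^ 2 + n ^ 2 * 3 := by linarith
    _ ≤ (2 * m + n) ^ 2 + n ^ 2 * h ^ 2 := by gcongr
    _ = _ := by simp [EuclideanSpace.real_norm_sq_eq, mul_pow]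

theorem Disk.isApart_rhombicLattice (hx : |d.center 0 - e.center 0| = x)
    (hy : |d.center 1 - e.center 1| = y) (hx₂ : x ≤ 2) (hyh : y ≤ h)
    (h₀₀ : (d.radius + e.radius) ^ 2 ≤ x ^ 2 + y ^ 2)
    (h₂₀ : (d.radius + e.radius) ^ 2 ≤ (2 - x) ^ 2 + y ^ 2)
    (h₁₁ : (d.radius + e.radius) ^ 2 ≤ (1 - x) ^ 2 + (h - y) ^ 2) :
    d.IsApart (rhombicLattice h) e := fun v hv => by
  rw [dist_eq_norm, ← sub_sub, sub_eq_add_neg]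
  exact le_norm_add_of_mem_rhombicLattice (by simpa using hx) (by simpa using hy) hx₂ hyh h₀₀ h₂₀
    h₁₁ (neg_mem hv)

theorem isLatticeSeparated_rhombicLattice (hh : 3 ≤ h ^ 2) (hB : ∀ d ∈ B, d.radius ≤ 1)
    (hpair : B.Pairwise (Disk.IsApart (rhombicLattice h))) :
    IsLatticeSeparated (rhombicLattice h) B :=
  ⟨hpair, fun d hd v hv hv₀ => by linarith [hB d hd, two_le_norm_of_mem_rhombicLattice hh hv hv₀]⟩

/-- One period of the dense packing: unit disks in hexagonal arrangement, with a disk of radius `s`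
in each hole. -/
noncomputable def filledHexagonalBase (s : ℝ) (hs : 0 < s) : Set Disk :=
  {⟨0, 1, one_pos⟩, ⟨!₂[1, √3 / 3], s, hs⟩, ⟨!₂[1, -(√3 / 3)], s, hs⟩}

variable {s : ℝ}

theorem isLatticeSeparated_filledHexagonalBase (hs : 0 < s) (hs' : s ≤ 0.1547) :
    IsLatticeSeparated (rhombicLattice √3) (filledHexagonalBase s hs) := by
  have hsq : √3 ^ 2 = 3 := Real.sq_sqrt (by norm_num)
  have hpos : 0 ≤ √3 / 3 := by positivity
  have hlarge (e : Disk) (hx : |e.center 0| = 1) (hy : |e.center 1| = √3 / 3)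
      (hr : e.radius = s) : Disk.IsApart (rhombicLattice √3) ⟨0, 1, one_pos⟩ e := by
    refine Disk.isApart_rhombicLattice (x := 1) (y := √3 / 3) (by simpa) (by simpa) ?_ ?_ ?_ ?_ ?_
      <;> nlinarith
  have hsmall : Disk.IsApart (rhombicLattice √3) ⟨!₂[1, √3 / 3], s, hs⟩
      ⟨!₂[1, -(√3 / 3)], s, hs⟩ := by
    refine Disk.isApart_rhombicLattice (x := 0) (y := 2 * √3 / 3) (by simp) ?_ ?_ ?_ ?_ ?_ ?_
    · simpa [← two_mul, mul_div_assoc] using hpos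
    all_goals nlinarith
  refine isLatticeSeparated_rhombicLattice hsq.ge ?_ ?_
  · rintro _ (rfl | rfl | rfl)
    exacts [le_rfl, by linarith, by linarith]
  · refine pairwise_insert_of_symm.2 ⟨pairwise_pair_of_symm.2 fun _ => hsmall, ?_⟩
    rintro _ (rfl | rfl) -
    exacts [hlarge _ (by simp) (by simp [abs_of_nonneg hpos]) rfl,
      hlarge _ (by simp) (by simp [abs_of_nonneg hpos]) rfl]

theorem radiiIn_filledHexagonalBase (hs : 0 < s) : RadiiIn (filledHexagonalBase s hs) {1, s} := by
  rintro _ (rfl | rfl | rfl) <;> simp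

theorem finsum_mem_filledHexagonalBase (hs : 0 < s) :
    ∑ᶠ d ∈ filledHexagonalBase s hs, d.radius ^ 2 = 1 + 2 * s ^ 2 := by
  have hpos : 0 < √3 / 3 := by positivity
  rw [filledHexagonalBase, finsum_mem_triple (ne_of_apply_ne (fun d : Disk => d.center 0) (by simp))
    (ne_of_apply_ne (fun d : Disk => d.center 0) (by simp))
    (ne_of_apply_ne (fun d : Disk => d.center 1) (by simpa using (by linarith)))]
  ring

theorem le_density_filledHexagonal (hs : s ∈ Icc 0.151397 0.1547) (hs₀ : 0 < s) :
    0.948 ≤ density (latticeTranslates (rhombicLattice √3) (filledHexagonalBase s hs₀)) := by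
  have hpos : 0 < √3 := by positivity
  have h := isLatticeSeparated_filledHexagonalBase hs₀ hs.2
  rw [← span_range_rhombicBasis hpos.ne'] at h ⊢
  refine le_trans ?_ (h.le_density _ (by simp [filledHexagonalBase]))
  rw [finsum_mem_filledHexagonalBase, volume_real_fundamentalDomain_rhombicBasis hpos,
    le_div_iff₀ (by positivity)]
  have hsqrt : √3 ≤ 1.7321 := Real.sqrt_le_iff.2 (by norm_num)
  nlinarith [Real.pi_gt_d4, hs.1]

end Rhombic

section Subdivision

variable {E : Type*} [AddCommGroup E] [Module ℝ E] {a b c p : E}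

theorem segment_subset_segment_union_segment (hp : p ∈ segment ℝ a b) :
    segment ℝ a b ⊆ segment ℝ a p ∪ segment ℝ p b := by
  rw [segment_eq_image_lineMap] at hp
  obtain ⟨t, -, rfl⟩ := hp
  have himage (u v : ℝ) : segment ℝ (AffineMap.lineMap a b u : E) (AffineMap.lineMap a b v) =
      AffineMap.lineMap a b '' uIcc u v := by
    rw [← segment_eq_uIcc, image_segment]
  have h := image_mono (f := AffineMap.lineMap a b)
    (uIcc_subset_uIcc_union_uIcc (a := (0 : ℝ)) (b := t) (c := 1))
  rwa [image_union, ← himage, ← himage, ← himage, AffineMap.lineMap_apply_zero,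
    AffineMap.lineMap_apply_one] at h

theorem convexHull_triple_subset_union (hp : p ∈ segment ℝ a b) :
    convexHull ℝ {c, a, b} ⊆ convexHull ℝ {c, a, p} ∪ convexHull ℝ {c, p, b} := by
  have hjoin (x y : E) : convexHull ℝ {c, x, y} = convexJoin ℝ {c} (segment ℝ x y) := by
    rw [convexHull_insert (insert_nonempty _ _), convexHull_pair]
  rw [hjoin, hjoin, hjoin, ← convexJoin_union_right]
  exact convexJoin_mono_right (segment_subset_segment_union_segment hp)

end Subdivision

section Cover

open scoped Pointwise

variable {h ε η : ℝ} {v x : Plane} {σ : ℝ} {L : Submodule ℤ Plane} {B T : Set Disk} {d : Disk}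

theorem exists_mem_rhombicLattice_sub_mem_convexHull (hh : h ≠ 0) (x : Plane) :
    ∃ v ∈ rhombicLattice h, ∃ ε : ℝ, |ε| = 1 ∧
      x - v ∈ convexHull ℝ {!₂[1, ε * h], !₂[0, 0], !₂[2, 0]} := by
  set n := ⌊x 1 / h⌋
  set m := ⌊(x 0 - x 1 / h) / 2⌋
  set u := Int.fract (x 1 / h)
  set w := Int.fract ((x 0 - x 1 / h) / 2)
  have hx₁ : x 1 = (n + u) * h := by rw [Int.floor_add_fract, div_mul_cancel₀ _ hh]
  have hx₀ : x 0 = 2 * (m + w) + (n + u) := by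
    rw [Int.floor_add_fract, Int.floor_add_fract]
    ring
  have hu : 0 ≤ u := Int.fract_nonneg _
  have hu₁ : u < 1 := Int.fract_lt_one _
  have hw : 0 ≤ w := Int.fract_nonneg _
  have hw₁ : w < 1 := Int.fract_lt_one _
  simp only [mem_convexHull_triple, PiLp.ext_iff, Fin.forall_fin_two]
  rcases le_total (w + u) 1 with hwu | hwu
  · refine ⟨_, mem_rhombicLattice.2 ⟨m, n, rfl⟩, 1, by simp, u, 1 - w - u, w, hu, by linarith, hw,
      by ring, ?_, ?_⟩
    · simp [hx₀]
      ring
    · simp [hx₁]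
      ring
  · refine ⟨_, mem_rhombicLattice.2 ⟨m, n + 1, rfl⟩, -1, by simp, 1 - u, 1 - w, w + u - 1,
      by linarith, by linarith, by linarith, by ring, ?_, ?_⟩
    · simp [hx₀]
      ring
    · simp [hx₁]
      ring

theorem IsTightTriad.image_translate (hT : IsTightTriad σ T) (v : Plane) :
    IsTightTriad σ ((·.translate v) '' T) := by
  obtain ⟨d, e, f, hde, hdf, hef, htight, rfl⟩ := hT
  refine ⟨d.translate v, e.translate v, f.translate v, ?_, ?_, ?_, htight,
    by rw [image_insert_eq, image_pair]⟩ <;> simpa [Disk.Tangent, Disk.translate]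

theorem hull_image_translate : hull ((·.translate v) '' T) = v +ᵥ hull T := by
  rw [hull, hull, ← convexHull_vadd, image_image, ← image_vadd, image_image]
  simp only [Disk.translate, vadd_eq_add, add_comm]

theorem hasTightCover_latticeTranslates (h : ∀ x, ∃ v ∈ L, ∃ T ⊆ latticeTranslates L B,
    IsTightTriad σ T ∧ x - v ∈ hull T) : HasTightCover σ (latticeTranslates L B) := fun x => by
  obtain ⟨v, hv, T, hTB, hT, hx⟩ := h x
  refine ⟨(·.translate v) '' T, ?_, hT.image_translate v, ?_⟩
  · rintro _ ⟨d, hd, rfl⟩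
    obtain ⟨e, he, w, hw, rfl⟩ := hTB hd
    refine ⟨e, he, w + v, L.add_mem hw hv, ?_⟩
    simp [Disk.translate, add_assoc]
  · rw [hull_image_translate]
    exact ⟨_, hx, add_sub_cancel v x⟩

theorem mem_latticeTranslates_of_translate_neg_mem (hv : v ∈ L) (hd : d.translate (-v) ∈ B) :
    d ∈ latticeTranslates L B :=
  ⟨_, hd, v, hv, by simp [Disk.translate]⟩

end Cover

/-! ### The triangulated packing -/

/-- The dimensions of the triangulated packing: in the rhombic lattice of height `h`, the unit disks
are centered at the lattice points, the disks of radius `r` at the translates of `(1, ±k)` and the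
disks of radius `s` at the translates of `(±f, ±f * h)`, on the edges of length `2 + 4 * s`. -/
structure IsTriangulatedDesign (r s h k f : ℝ) : Prop extends IsSpecialRadii r s where
  height_pos : 0 < h
  one_add_sq : 1 + h ^ 2 = (2 + 4 * s) ^ 2
  sub_eq : h - k = 1 + r
  one_add_sq' : 1 + k ^ 2 = (1 + r) ^ 2
  mul_eq : f * (2 + 4 * s) = 1 + s

theorem IsSpecialRadii.exists_isTriangulatedDesign {r s : ℝ} (hrs : IsSpecialRadii r s) :
    ∃ h k f, IsTriangulatedDesign r s h k f := by
  have hs := hrs.pos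
  have hs₁ : 0 < 1 - s := by linarith [hrs.mem_Icc.2]
  set h := √((1 + 4 * s) * (3 + 4 * s))
  have hsq : h ^ 2 = (1 + 4 * s) * (3 + 4 * s) := Real.sq_sqrt (by positivity)
  have hroot : (1 + s + 2 * s ^ 2) * h = 2 * (1 + 2 * s) ^ 2 * (1 - s) := by
    apply (pow_left_inj₀ (by positivity) (by positivity) two_ne_zero).1
    rw [mul_pow, hsq]
    linear_combination hrs.eq_zero
  have hheight : 2 * h * (1 + r) = (2 + 4 * s) ^ 2 := by
    apply mul_right_cancel₀ hs₁.ne'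
    linear_combination 2 * h * hrs.rel + 2 * hroot
  refine ⟨h, h - (1 + r), (1 + s) / (2 + 4 * s), hrs, Real.sqrt_pos.2 (by positivity), ?_, by ring,
    ?_, div_mul_cancel₀ _ (by positivity)⟩
  · linear_combination hsq
  · linear_combination hsq - hheight

namespace IsTriangulatedDesign

variable {r s h k f : ℝ} (H : IsTriangulatedDesign r s h k f)
include H

theorem height_mem_Icc : h ∈ Icc 2.406 2.4062 := by
  have := H.height_pos
  have := H.one_add_sq
  obtain ⟨hs, hs'⟩ := H.mem_Icc
  constructor <;> nlinarith

theorem k_mem_Icc : k ∈ Icc 0.995 0.9955 := by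
  obtain ⟨hh, hh'⟩ := H.height_mem_Icc
  obtain ⟨hr, hr'⟩ := H.mem_Icc_right
  constructor <;> linarith [H.sub_eq]

theorem f_mem_Icc : f ∈ Icc 0.4418 0.442 := by
  have := H.mul_eq
  obtain ⟨hs, hs'⟩ := H.mem_Icc
  constructor <;> nlinarith

theorem f_mul_height_mem_Icc : f * h ∈ Icc 1.0629 1.0636 := by
  obtain ⟨hh, hh'⟩ := H.height_mem_Icc
  obtain ⟨hf, hf'⟩ := H.f_mem_Icc
  constructor <;> nlinarith

theorem sq_add_sq_one_small : f ^ 2 + (f * h) ^ 2 = (1 + s) ^ 2 := by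
  rw [← H.mul_eq]
  linear_combination f ^ 2 * H.one_add_sq

theorem two_mul_height_mul : 2 * h * (1 + r) = (2 + 4 * s) ^ 2 := by
  obtain rfl : k = h - (1 + r) := by linarith [H.sub_eq]
  linear_combination H.one_add_sq - H.one_add_sq'

theorem sq_add_sq_right_small : (1 - f) ^ 2 + (f * h - k) ^ 2 = (r + s) ^ 2 := by
  obtain rfl : k = h - (1 + r) := by linarith [H.sub_eq]
  linear_combination (1 - 2 * f) * H.one_add_sq - (1 - f) * H.two_mul_height_mul +
    H.sq_add_sq_one_small - (2 + 4 * s) * H.mul_eq + 2 * H.rel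

theorem sq_add_sq_right_small' : f ^ 2 + (h - k - f * h) ^ 2 = (r + s) ^ 2 := by
  obtain rfl : k = h - (1 + r) := by linarith [H.sub_eq]
  linear_combination -f * H.two_mul_height_mul + H.sq_add_sq_one_small -
    (2 + 4 * s) * H.mul_eq + 2 * H.rel

theorem sq_add_sq_small_small : (1 - 2 * f) ^ 2 + (h - 2 * (f * h)) ^ 2 = (s + s) ^ 2 := by
  have hs : s + s = (1 - 2 * f) * (2 + 4 * s) := by linear_combination 2 * H.mul_eq
  rw [hs]
  linear_combination (1 - 2 * f) ^ 2 * H.one_add_sq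

end IsTriangulatedDesign

/-- One period of `triangulatedPacking`. -/
def triangulatedBase (r s h k f : ℝ) : Set Disk :=
  {d | d.center 0 = 0 ∧ d.center 1 = 0 ∧ d.radius = 1 ∨
    d.center 0 = 1 ∧ |d.center 1| = k ∧ d.radius = r ∨
    |d.center 0| = f ∧ |d.center 1| = f * h ∧ d.radius = s}

/-- The triangulated packing described in `IsTriangulatedDesign`. -/
abbrev triangulatedPacking (r s h k f : ℝ) : Set Disk :=
  latticeTranslates (rhombicLattice h) (triangulatedBase r s h k f)

theorem radiiIn_triangulatedBase (r s h k f : ℝ) : RadiiIn (triangulatedBase r s h k f) {1, r, s} :=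
  fun _ hd => by rcases hd with hd | hd | hd <;> simp [hd.2.2]

theorem Disk.eq_of_center_of_radius {d e : Disk} (h₀ : d.center 0 = e.center 0)
    (h₁ : d.center 1 = e.center 1) (hr : d.radius = e.radius) : d = e := by
  obtain ⟨c, ρ, hρ⟩ := d
  obtain ⟨c', ρ', hρ'⟩ := e
  obtain rfl : c = c' := by
    ext i
    fin_cases i <;> assumption
  obtain rfl : ρ = ρ' := hr
  rfl

namespace IsTriangulatedDesign

variable {r s h k f : ℝ} {d e : Disk} (H : IsTriangulatedDesign r s h k f)
include H

theorem isApart_one_right (hd₀ : d.center 0 = 0) (hd₁ : d.center 1 = 0) (hdr : d.radius = 1)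
    (he₀ : e.center 0 = 1) (he₁ : |e.center 1| = k) (her : e.radius = r) :
    d.IsApart (rhombicLattice h) e := by
  have hk := H.k_mem_Icc.2
  have hh := H.height_mem_Icc.1
  refine Disk.isApart_rhombicLattice (x := 1) (y := k) (by simp [hd₀, he₀]) (by simpa [hd₁])
    one_le_two (by linarith) ?_ ?_ ?_ <;> rw [hdr, her]
  · linarith [H.one_add_sq']
  · linarith [H.one_add_sq']
  · simp [H.sub_eq]

theorem isApart_one_small (hd₀ : d.center 0 = 0) (hd₁ : d.center 1 = 0) (hdr : d.radius = 1)
    (he₀ : |e.center 0| = f) (he₁ : |e.center 1| = f * h) (her : e.radius = s) :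
    d.IsApart (rhombicLattice h) e := by
  have hh := H.height_mem_Icc.1
  have hf := H.f_mem_Icc.2
  have hfh := H.f_mul_height_mem_Icc.2
  have hone := H.sq_add_sq_one_small
  refine Disk.isApart_rhombicLattice (x := f) (y := f * h) (by simpa [hd₀]) (by simpa [hd₁])
    (by linarith) (by linarith) ?_ ?_ ?_ <;> rw [hdr, her]
  · exact hone.ge
  · linarith
  · nlinarith

theorem isApart_right_right (hne : d ≠ e) (hd₀ : d.center 0 = 1) (hd₁ : |d.center 1| = k)
    (hdr : d.radius = r) (he₀ : e.center 0 = 1) (he₁ : |e.center 1| = k) (her : e.radius = r) :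
    d.IsApart (rhombicLattice h) e := by
  have hr := H.mem_Icc_right.2
  have hr₀ := H.pos_right
  obtain ⟨hk, hk'⟩ := H.k_mem_Icc
  have hh := H.height_mem_Icc.1
  have hopp : d.center 1 = -e.center 1 := (abs_eq_abs.1 (hd₁.trans he₁.symm)).resolve_left
    fun h₁ => hne (Disk.eq_of_center_of_radius (hd₀.trans he₀.symm) h₁ (hdr.trans her.symm))
  refine Disk.isApart_rhombicLattice (x := 0) (y := 2 * k) (by simp [hd₀, he₀])
    (by rw [hopp, ← he₁, ← abs_neg, neg_sub, sub_neg_eq_add, ← two_mul, abs_mul, abs_two])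
    zero_le_two (by linarith) ?_ ?_ ?_ <;> rw [hdr, her] <;> nlinarith

theorem isApart_right_small (hd₀ : d.center 0 = 1) (hd₁ : |d.center 1| = k) (hdr : d.radius = r)
    (he₀ : |e.center 0| = f) (he₁ : |e.center 1| = f * h) (her : e.radius = s) :
    d.IsApart (rhombicLattice h) e := by
  have hk' := H.k_mem_Icc.2
  have hf' := H.f_mem_Icc.2
  obtain ⟨hfh, hfh'⟩ := H.f_mul_height_mem_Icc
  have hh := H.height_mem_Icc.1
  have hx : |d.center 0 - e.center 0| = 1 - e.center 0 := by
    rw [hd₀, abs_of_nonneg]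
    linarith [le_abs_self (e.center 0)]
  have hxf : (1 - (1 - e.center 0)) ^ 2 = f ^ 2 := by rw [sub_sub_cancel, ← he₀, sq_abs]
  obtain ⟨hx₁, hx₂⟩ := abs_le.1 he₀.le
  have hy : f * h - k ≤ |d.center 1 - e.center 1| := by
    rw [← hd₁, ← he₁, abs_sub_comm]
    exact abs_sub_abs_le_abs_sub _ _
  have hy' : |d.center 1 - e.center 1| ≤ k + f * h := by
    rw [← hd₁, ← he₁]
    exact abs_sub _ _
  have hright := H.sq_add_sq_right_small
  refine Disk.isApart_rhombicLattice hx rfl (by linarith) (by linarith) ?_ ?_ ?_ <;> rw [hdr, her]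
  · rw [← hright]
    gcongr ?_ ^ 2 + ?_ ^ 2 <;> linarith
  · rw [← hright]
    gcongr ?_ ^ 2 + ?_ ^ 2 <;> linarith
  · rw [hxf, ← H.sq_add_sq_right_small']
    gcongr f ^ 2 + ?_ ^ 2 <;> linarith

theorem isApart_small_small (hne : d ≠ e) (hd₀ : |d.center 0| = f) (hd₁ : |d.center 1| = f * h)
    (hdr : d.radius = s) (he₀ : |e.center 0| = f) (he₁ : |e.center 1| = f * h)
    (her : e.radius = s) : d.IsApart (rhombicLattice h) e := by
  have hs := H.mem_Icc.2
  have hs₀ := H.pos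
  obtain ⟨hf, hf'⟩ := H.f_mem_Icc
  obtain ⟨hfh, hfh'⟩ := H.f_mul_height_mem_Icc
  have hh := H.height_mem_Icc.1
  have hsub {a b c : ℝ} (hb : |b| = c) (hab : a = -b) : |a - b| = 2 * c := by
    rw [hab, ← hb, ← abs_neg, neg_sub, sub_neg_eq_add, ← two_mul, abs_mul, abs_two]
  rcases abs_eq_abs.1 (hd₀.trans he₀.symm) with h₀ | h₀ <;>
    rcases abs_eq_abs.1 (hd₁.trans he₁.symm) with h₁ | h₁
  · exact absurd (Disk.eq_of_center_of_radius h₀ h₁ (hdr.trans her.symm)) hne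
  · refine Disk.isApart_rhombicLattice (x := 0) (by simp [h₀]) (hsub he₁ h₁)
      zero_le_two (by linarith) ?_ ?_ ?_ <;> rw [hdr, her] <;> nlinarith
  · refine Disk.isApart_rhombicLattice (y := 0) (hsub he₀ h₀) (by simp [h₁])
      (by linarith) (by linarith) ?_ ?_ ?_ <;> rw [hdr, her] <;> nlinarith
  · refine Disk.isApart_rhombicLattice (hsub he₀ h₀) (hsub he₁ h₁)
      (by linarith) (by linarith) ?_ ?_ ?_ <;> rw [hdr, her]
    · nlinarith
    · nlinarith
    · exact H.sq_add_sq_small_small.ge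

theorem isLatticeSeparated :
    IsLatticeSeparated (rhombicLattice h) (triangulatedBase r s h k f) := by
  refine isLatticeSeparated_rhombicLattice (by nlinarith [H.height_mem_Icc.1]) ?_ ?_
  · rintro d (hd | hd | hd) <;> rw [hd.2.2]
    exacts [H.lt_one.le, (H.lt.trans H.lt_one).le]
  rintro d (⟨hd₀, hd₁, hdr⟩ | ⟨hd₀, hd₁, hdr⟩ | ⟨hd₀, hd₁, hdr⟩)
    e (⟨he₀, he₁, her⟩ | ⟨he₀, he₁, her⟩ | ⟨he₀, he₁, her⟩) hne
  · exact absurd (Disk.eq_of_center_of_radius (hd₀.trans he₀.symm) (hd₁.trans he₁.symm)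
      (hdr.trans her.symm)) hne
  · exact H.isApart_one_right hd₀ hd₁ hdr he₀ he₁ her
  · exact H.isApart_one_small hd₀ hd₁ hdr he₀ he₁ her
  · exact (H.isApart_one_right he₀ he₁ her hd₀ hd₁ hdr).symm
  · exact H.isApart_right_right hne hd₀ hd₁ hdr he₀ he₁ her
  · exact H.isApart_right_small hd₀ hd₁ hdr he₀ he₁ her
  · exact (H.isApart_one_small he₀ he₁ her hd₀ hd₁ hdr).symm
  · exact (H.isApart_right_small he₀ he₁ her hd₀ hd₁ hdr).symm
  · exact H.isApart_small_small hne hd₀ hd₁ hdr he₀ he₁ her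

end IsTriangulatedDesign

variable {h ε η : ℝ}

theorem mem_rhombicLattice_of_abs_eq_one (hε : |ε| = 1) : !₂[1, ε * h] ∈ rhombicLattice h := by
  rcases eq_or_eq_neg_of_abs_eq hε with rfl | rfl
  · exact mem_rhombicLattice.2 ⟨0, 1, by norm_num⟩
  · exact mem_rhombicLattice.2 ⟨1, -1, by norm_num⟩

theorem one_sub_mem_rhombicLattice_of_abs_eq_one (hη : |η| = 1) :
    !₂[1 - η, 0] ∈ rhombicLattice h := by
  rcases eq_or_eq_neg_of_abs_eq hη with rfl | rfl
  · exact mem_rhombicLattice.2 ⟨0, 0, by norm_num⟩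
  · exact mem_rhombicLattice.2 ⟨1, 0, by norm_num⟩

theorem Disk.tangent_of_sq_add_sq {d e : Disk}
    (h : (d.center 0 - e.center 0) ^ 2 + (d.center 1 - e.center 1) ^ 2 =
      (d.radius + e.radius) ^ 2) : d.Tangent e := by
  rw [Disk.Tangent, EuclideanSpace.dist_eq, Fin.sum_univ_two, Real.dist_eq, Real.dist_eq, sq_abs,
    sq_abs, h, Real.sqrt_sq (add_pos d.radius_pos e.radius_pos).le]

theorem midpoint_mem_segment_one_sub_one_add (η : ℝ) :
    (!₂[1, 0] : Plane) ∈ segment ℝ !₂[1 - η, 0] !₂[1 + η, 0] :=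
  ⟨1 / 2, 1 / 2, by norm_num, by norm_num, by norm_num, by ext i; fin_cases i <;> simp; ring⟩

theorem exists_mem_half_of_mem_convexHull {p c : Plane}
    (hp : p ∈ convexHull ℝ {c, !₂[0, 0], !₂[2, 0]}) :
    ∃ η : ℝ, |η| = 1 ∧ p ∈ convexHull ℝ {!₂[1 - η, 0], !₂[1, 0], c} := by
  have hmid := midpoint_mem_segment_one_sub_one_add 1
  rw [sub_self, one_add_one_eq_two] at hmid
  rcases convexHull_triple_subset_union hmid hp with hp | hp
  · refine ⟨1, by simp, ?_⟩
    rw [sub_self]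
    rwa [insert_comm, pair_comm] at hp
  · refine ⟨-1, by simp, ?_⟩
    rw [sub_neg_eq_add, one_add_one_eq_two]
    rwa [pair_comm, insert_comm, pair_comm] at hp

theorem exists_mem_subdivision_of_mem_convexHull {k f : ℝ} {p : Plane} (hh : 0 < h)
    (hk : k ∈ Icc 0 h) (hf : f ∈ Icc 0 (1 / 2))
    (hp : p ∈ convexHull ℝ {!₂[1, ε * h], !₂[0, 0], !₂[2, 0]}) :
    ∃ η : ℝ, |η| = 1 ∧
      (p ∈ convexHull ℝ {!₂[1 - η, 0], !₂[1 + η, 0], !₂[1, ε * k]} ∨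
      p ∈ convexHull ℝ {!₂[1 - η, 0], !₂[1, ε * k], !₂[1 - η + η * f, ε * (f * h)]} ∨
      p ∈ convexHull ℝ {!₂[1 - η + η * f, ε * (f * h)], !₂[1, ε * k],
        !₂[1 - η * f, ε * (h - f * h)]} ∨
      p ∈ convexHull ℝ {!₂[1, ε * h], !₂[1, ε * k], !₂[1 - η * f, ε * (h - f * h)]}) := by
  obtain ⟨η, hη, hp⟩ := exists_mem_half_of_mem_convexHull hp
  refine ⟨η, hη, ?_⟩
  have hright : !₂[1, ε * k] ∈ segment ℝ !₂[1, 0] !₂[1, ε * h] := by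
    refine ⟨1 - k / h, k / h, ?_, ?_, by ring, ?_⟩
    · rw [sub_nonneg, div_le_one hh]
      exact hk.2
    · exact div_nonneg hk.1 hh.le
    · ext i; fin_cases i <;> simp; field_simp
  have hsmall : !₂[1 - η + η * f, ε * (f * h)] ∈ segment ℝ !₂[1 - η, 0] !₂[1, ε * h] := by
    refine ⟨1 - f, f, by linarith [hf.2], hf.1, by ring, ?_⟩
    ext i; fin_cases i <;> simp <;> ring
  have hsmall' : !₂[1 - η * f, ε * (h - f * h)] ∈
      segment ℝ !₂[1 - η + η * f, ε * (f * h)] !₂[1, ε * h] := by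
    have hf₁ : 0 < 1 - f := by linarith [hf.2]
    refine ⟨f / (1 - f), (1 - 2 * f) / (1 - f), div_nonneg hf.1 hf₁.le,
      div_nonneg (by linarith [hf.2]) hf₁.le, ?_, ?_⟩
    · field_simp
      ring
    · ext i; fin_cases i <;> simp <;> field_simp <;> ring
  rcases convexHull_triple_subset_union hright hp with hp | hp
  · refine .inl (convexHull_min ?_ (convex_convexHull ℝ _) hp)
    simp only [insert_subset_iff, singleton_subset_iff]
    refine ⟨subset_convexHull ℝ _ (by simp), ?_, subset_convexHull ℝ _ (by simp)⟩
    exact segment_subset_convexHull (by simp) (by simp) (midpoint_mem_segment_one_sub_one_add η)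
  rw [insert_comm] at hp
  rcases convexHull_triple_subset_union hsmall hp with hp | hp
  · exact .inr <| .inl <| by rwa [insert_comm] at hp
  rcases convexHull_triple_subset_union hsmall' hp with hp | hp
  · exact .inr <| .inr <| .inl <| by rwa [insert_comm] at hp
  · exact .inr <| .inr <| .inr <| by rwa [pair_comm, insert_comm] at hp

theorem IsTightTriad.exists_mem_hull {σ : ℝ} {P : Set Disk} {d e f : Disk} {p : Plane}
    (hT : IsTightTriad σ {d, e, f}) (hd : d ∈ P) (he : e ∈ P) (hf : f ∈ P)
    (hp : p ∈ convexHull ℝ {d.center, e.center, f.center}) :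
    ∃ T ⊆ P, IsTightTriad σ T ∧ p ∈ hull T :=
  ⟨{d, e, f}, by simp [insert_subset_iff, *], hT, by rwa [hull_triple]⟩

variable {r s k f : ℝ} {v c : Plane}

theorem unit_disk_mem_triangulatedPacking (hv : v ∈ rhombicLattice h) :
    ⟨v, 1, one_pos⟩ ∈ triangulatedPacking r s h k f :=
  mem_latticeTranslates_of_translate_neg_mem hv (by simp [Disk.translate, triangulatedBase])

theorem usesRadius_triangulatedPacking_one : UsesRadius (triangulatedPacking r s h k f) 1 :=
  ⟨_, unit_disk_mem_triangulatedPacking (zero_mem _), rfl⟩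

namespace IsTriangulatedDesign

variable (H : IsTriangulatedDesign r s h k f)

include H

theorem right_disk_mem (hε : |ε| = 1) :
    ⟨!₂[1, ε * k], r, H.pos_right⟩ ∈ triangulatedPacking r s h k f :=
  subset_latticeTranslates <| .inr <| .inl
    ⟨rfl, by simpa [abs_mul, hε] using H.k_mem_Icc.1.trans' (by norm_num), rfl⟩

theorem small_disk_mem (hη : |η| = 1) (hε : |ε| = 1) (hv : v ∈ rhombicLattice h)
    (hc : c = v + !₂[η * f, ε * (f * h)]) : ⟨c, s, H.pos⟩ ∈ triangulatedPacking r s h k f := by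
  have hf : |f| = f := abs_of_nonneg (H.f_mem_Icc.1.trans' (by norm_num))
  have hh : |h| = h := abs_of_pos H.height_pos
  exact mem_latticeTranslates_of_translate_neg_mem hv <| .inr <| .inr <| by
    simp [Disk.translate, hc, abs_mul, hη, hε, hf, hh]

theorem isTightTriad_one_one_right (hη : η ^ 2 = 1) (hε : ε ^ 2 = 1) :
    IsTightTriad s {⟨!₂[1 - η, 0], 1, one_pos⟩, ⟨!₂[1 + η, 0], 1, one_pos⟩,
      ⟨!₂[1, ε * k], r, H.pos_right⟩} := by
  refine ⟨_, _, _, ?_, ?_, ?_, H.isTight_one_one_right, rfl⟩ <;>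
    apply Disk.tangent_of_sq_add_sq <;> simp
  · linear_combination 4 * hη
  · linear_combination hη + k ^ 2 * hε + H.one_add_sq'
  · linear_combination hη + k ^ 2 * hε + H.one_add_sq'

theorem isTightTriad_one_right_small (hη : η ^ 2 = 1) (hε : ε ^ 2 = 1) :
    IsTightTriad s {⟨!₂[1 - η, 0], 1, one_pos⟩, ⟨!₂[1, ε * k], r, H.pos_right⟩,
      ⟨!₂[1 - η + η * f, ε * (f * h)], s, H.pos⟩} := by
  refine ⟨_, _, _, ?_, ?_, ?_, H.isTight_one_right_left, rfl⟩ <;>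
    apply Disk.tangent_of_sq_add_sq <;> simp
  · linear_combination hη + k ^ 2 * hε + H.one_add_sq'
  · linear_combination f ^ 2 * hη + (f * h) ^ 2 * hε + H.sq_add_sq_one_small
  · linear_combination
      (1 - f) ^ 2 * hη + (f * h - k) ^ 2 * hε + H.sq_add_sq_right_small

theorem isTightTriad_small_right_small (hη : η ^ 2 = 1) (hε : ε ^ 2 = 1) :
    IsTightTriad s {⟨!₂[1 - η + η * f, ε * (f * h)], s, H.pos⟩,
      ⟨!₂[1, ε * k], r, H.pos_right⟩, ⟨!₂[1 - η * f, ε * (h - f * h)], s, H.pos⟩} := by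
  refine ⟨_, _, _, ?_, ?_, ?_, H.isTight_left_right_left, rfl⟩ <;>
    apply Disk.tangent_of_sq_add_sq <;> simp
  · linear_combination
      (1 - f) ^ 2 * hη + (f * h - k) ^ 2 * hε + H.sq_add_sq_right_small
  · linear_combination
      (1 - 2 * f) ^ 2 * hη + (h - 2 * (f * h)) ^ 2 * hε + H.sq_add_sq_small_small
  · linear_combination f ^ 2 * hη + (h - k - f * h) ^ 2 * hε + H.sq_add_sq_right_small'

theorem isTightTriad_one_right_small' (hη : η ^ 2 = 1) (hε : ε ^ 2 = 1) :
    IsTightTriad s {⟨!₂[1, ε * h], 1, one_pos⟩, ⟨!₂[1, ε * k], r, H.pos_right⟩,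
      ⟨!₂[1 - η * f, ε * (h - f * h)], s, H.pos⟩} := by
  refine ⟨_, _, _, ?_, ?_, ?_, H.isTight_one_right_left, rfl⟩ <;>
    apply Disk.tangent_of_sq_add_sq <;> simp
  · linear_combination (h - k) ^ 2 * hε + (h - k + 1 + r) * H.sub_eq
  · linear_combination f ^ 2 * hη + (f * h) ^ 2 * hε + H.sq_add_sq_one_small
  · linear_combination f ^ 2 * hη + (h - k - f * h) ^ 2 * hε + H.sq_add_sq_right_small'

theorem exists_isTightTriad (hε : |ε| = 1) {p : Plane}
    (hp : p ∈ convexHull ℝ {!₂[1, ε * h], !₂[0, 0], !₂[2, 0]}) :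
    ∃ T ⊆ triangulatedPacking r s h k f, IsTightTriad s T ∧ p ∈ hull T := by
  have hk : k ∈ Icc 0 h := by
    constructor <;> linarith [H.k_mem_Icc.1, H.sub_eq, H.pos_right]
  have hf : f ∈ Icc 0 (1 / 2) := by
    constructor <;> linarith [H.f_mem_Icc.1, H.f_mem_Icc.2]
  obtain ⟨η, hη, hp⟩ := exists_mem_subdivision_of_mem_convexHull H.height_pos hk hf hp
  have hε₂ : ε ^ 2 = 1 := by rw [← sq_abs, hε, one_pow]
  have hη₂ : η ^ 2 = 1 := by rw [← sq_abs, hη, one_pow]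
  have hη' : |-η| = 1 := (abs_neg η).trans hη
  have hlat : !₂[1 - η, 0] ∈ rhombicLattice h := one_sub_mem_rhombicLattice_of_abs_eq_one hη
  have hlat' : !₂[1 + η, 0] ∈ rhombicLattice h := by
    simpa using one_sub_mem_rhombicLattice_of_abs_eq_one hη'
  have happex := mem_rhombicLattice_of_abs_eq_one (h := h) hε
  have hone := unit_disk_mem_triangulatedPacking (r := r) (s := s) (k := k) (f := f) hlat
  have hright := H.right_disk_mem hε
  have hsmall : ⟨!₂[1 - η + η * f, ε * (f * h)], s, H.pos⟩ ∈ triangulatedPacking r s h k f :=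
    H.small_disk_mem hη hε hlat (by ext i; fin_cases i <;> simp)
  have hsmall' : ⟨!₂[1 - η * f, ε * (h - f * h)], s, H.pos⟩ ∈ triangulatedPacking r s h k f :=
    H.small_disk_mem hη' ((abs_neg ε).trans hε) happex (by ext i; fin_cases i <;> simp <;> ring)
  rcases hp with hp | hp | hp | hp
  · exact (H.isTightTriad_one_one_right hη₂ hε₂).exists_mem_hull hone
      (unit_disk_mem_triangulatedPacking hlat') hright hp
  · exact (H.isTightTriad_one_right_small hη₂ hε₂).exists_mem_hull hone hright hsmall hp
  · exact (H.isTightTriad_small_right_small hη₂ hε₂).exists_mem_hull hsmall hright hsmall' hp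
  · exact (H.isTightTriad_one_right_small' hη₂ hε₂).exists_mem_hull
      (unit_disk_mem_triangulatedPacking happex) hright hsmall' hp

theorem hasTightCover : HasTightCover s (triangulatedPacking r s h k f) :=
  hasTightCover_latticeTranslates fun x => by
    obtain ⟨v, hv, ε, hε, hx⟩ := exists_mem_rhombicLattice_sub_mem_convexHull H.height_pos.ne' x
    exact ⟨v, hv, H.exists_isTightTriad hε hx⟩

theorem usesRadius_right : UsesRadius (triangulatedPacking r s h k f) r :=
  ⟨_, H.right_disk_mem abs_one, rfl⟩

theorem usesRadius_left : UsesRadius (triangulatedPacking r s h k f) s :=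
  ⟨_, H.small_disk_mem abs_one abs_one (zero_mem _) rfl, rfl⟩

end IsTriangulatedDesign

/-- there are radii `1, r, s` admitting a saturated compact packing using
all three radii, for which some (non-compact) packing is strictly denser than every
compact packing with these radii. -/
theorem compact_not_always_densest :
    ∃ r s : ℝ, 0 < s ∧ s < r ∧ r < 1 ∧
      (∃ P : Set Disk, IsCompactPacking P ∧ RadiiIn P {1, r, s} ∧
        UsesRadius P 1 ∧ UsesRadius P r ∧ UsesRadius P s ∧ Saturated P {1, r, s}) ∧
      ∃ Q : Set Disk, IsPacking Q ∧ RadiiIn Q {1, r, s} ∧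
        ∀ P' : Set Disk, IsCompactPacking P' → RadiiIn P' {1, r, s} →
          density P' < density Q := by
  obtain ⟨r, s, hrs⟩ := exists_isSpecialRadii
  obtain ⟨h, k, f, H⟩ := hrs.exists_isTriangulatedDesign
  have hradii := (radiiIn_triangulatedBase r s h k f).latticeTranslates (L := rhombicLattice h)
  have hP := hrs.isUniformPacking H.isLatticeSeparated.isPacking hradii
  refine ⟨r, s, hrs.pos, hrs.lt, hrs.lt_one, ⟨triangulatedPacking r s h k f,
    hP.isCompactPacking_of_hasTightCover H.hasTightCover, hradii,
    usesRadius_triangulatedPacking_one, H.usesRadius_right, H.usesRadius_left,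
    H.hasTightCover.saturated ?_⟩,
    latticeTranslates (rhombicLattice √3) (filledHexagonalBase s hrs.pos),
    (isLatticeSeparated_filledHexagonalBase hrs.pos ?_).isPacking, ?_, fun P' hP' hP'radii => ?_⟩
  · simp [hrs.lt.le, (hrs.lt.trans hrs.lt_one).le]
  · linarith [hrs.mem_Icc.2]
  · refine fun d hd => ?_
    rcases (radiiIn_filledHexagonalBase hrs.pos).latticeTranslates d hd with hd | hd <;> simp [hd]
  · have hs : s ∈ Icc 0.151397 0.1547 := ⟨hrs.mem_Icc.1, hrs.mem_Icc.2.trans (by norm_num)⟩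
    linarith [hrs.density_le hP' hP'radii, le_density_filledHexagonal hs hrs.pos]
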